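/- arXiv:2006.14671 — 4 statements merged into one kernel-verified Lean document; each statement's English description precedes it below -/
import Mathlib

section
/- Let n > 1 be an integer divisible only by primes congruent to 1 modulo 3, and let G = μ_n ⋊_χ μ_3 be a balanced semidirect product. Then there exist a number field K and an associative unital K-algebra A which is a division ring, has center equal to K, and has dimension 9 over K, such that the quotient group Aˣ/Kˣ contains a subgroup isomorphic to G. -/
/-- The central subgroup `Kˣ ⊆ Aˣ`: the units of `A` lying in the image of the structure map
`K → A`. -/
def centralUnits (K A : Type*) [Field K] [DivisionRing A] [Algebra K A] : Subgroup Aˣ :=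
  (Units.map (algebraMap K A).toMonoidHom).range

instance centralUnits_normal (K A : Type*) [Field K] [DivisionRing A] [Algebra K A] :
    (centralUnits K A).Normal := by
  constructor
  intro x hx g
  obtain ⟨k, hk⟩ := hx
  have hx' : (x : A) = algebraMap K A (k : K) := by rw [← hk]; rfl
  have h1 : g * x = x * g := by
    apply Units.ext
    rw [Units.val_mul, Units.val_mul, hx']
    exact (Algebra.commutes (k : K) (g : A)).symm
  have h2 : g * x * g⁻¹ = x := by rw [h1, mul_inv_cancel_right]
  rw [h2]
  exact ⟨k, hk⟩

/-- A central division algebra of dimension `9` over a number field `K`: the data of a number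
field `K` and an associative unital `K`-algebra `A` which is a division ring, has center equal
to `K`, and has dimension `9` over `K`. Such an algebra corresponds to a non-trivial
Severi–Brauer surface `S` over `K`, with `Aut(S) ≅ Aˣ/Kˣ`. -/
structure CentralDivAlg where
  K : Type
  A : Type
  [fieldK : Field K]
  [numberFieldK : NumberField K]
  [divisionRingA : DivisionRing A]
  [algebraKA : Algebra K A]
  center_eq_bot : Subalgebra.center K A = ⊥
  finrank_eq_nine : Module.finrank K A = 9

attribute [instance] CentralDivAlg.fieldK CentralDivAlg.numberFieldK
  CentralDivAlg.divisionRingA CentralDivAlg.algebraKA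

/-- The quotient group `Aˣ/Kˣ`, isomorphic to the automorphism group of the corresponding
Severi–Brauer surface. -/
abbrev CentralDivAlg.Q (D : CentralDivAlg) : Type := (D.A)ˣ ⧸ centralUnits D.K D.A

def zmodAction (n : ℕ) : (ZMod n)ˣ →* MulAut (Multiplicative (ZMod n)) where
  toFun u := AddEquiv.toMultiplicative (DistribMulAction.toAddAut (ZMod n)ˣ (ZMod n) u)
  map_one' := by ext t; simp
  map_mul' := by intro u v; ext t; simp [mul_smul]

def IsBalanced (n : ℕ) (χ : Multiplicative (ZMod 3) →* (ZMod n)ˣ) : Prop :=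
  ∀ p : ℕ, p.Prime → p ∣ n →
    Function.Injective
      ((Units.map (ZMod.castHom (Nat.ordProj_dvd n p)
        (ZMod (p ^ n.factorization p))).toMonoidHom).comp χ)

/-!
Put `c = χ(1)` and let `σ` be the automorphism `ζ ↦ ζ ^ c` of `L = ℚ(μ_n)`, so that `μ_m` acts on
`L` through `⟨σ⟩`, with fixed field `K`. By Dirichlet there is a prime `q ≡ c` modulo `n`; then `σ`
is the Frobenius at `q`, so a prime of `L` above `q` is unramified over `ℚ` and fixed by `σ`. In the
cyclic algebra `A = ⨁ L uⁱ` with `u a = σ(a) u` and `u ^ m = q`, the valuation `v` of that prime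
extends by giving `u` the value `v(q) / m`. The monomials of an element then have pairwise different
values, so a product of nonzero elements is nonzero and `A` is a division algebra. The units `ζⁱ uʲ`
multiply as in `μ_n ⋊ μ_m` up to powers of `q ∈ Kˣ`, and no nontrivial one of them lies in `K`
because `c - 1` is a unit modulo `n`.
-/

theorem mk_centralUnits_eq_mk_iff {K A : Type*} [Field K] [DivisionRing A] [Algebra K A]
    {u v : Aˣ} : (u : Aˣ ⧸ centralUnits K A) = v ↔ ∃ c : K, c • (u : A) = v := by
  rw [QuotientGroup.eq]
  constructor
  · rintro ⟨c, hc⟩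
    refine ⟨c, ?_⟩
    rw [eq_inv_mul_iff_mul_eq] at hc
    rw [← hc, Algebra.smul_def, Algebra.commutes]
    rfl
  · rintro ⟨c, hc⟩
    have hc0 : c ≠ 0 := by
      rintro rfl
      exact v.ne_zero (by rw [← hc, zero_smul])
    refine ⟨Units.mk0 c hc0, ?_⟩
    rw [eq_inv_mul_iff_mul_eq]
    ext
    rw [← hc, Algebra.smul_def, Algebra.commutes]
    rfl

/-- The crossed product of a commutative ring `L` with a group `G` acting on it, along a
2-cocycle `f`: the free left `L`-module on symbols `u g`, with `u g * a = (g • a) * u g` and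
`u g * u h = f (g, h) * u (g * h)`. An element is encoded by its family of coefficients. -/
def CrossedProduct {G L : Type*} [CommRing L] (_f : G × G → Lˣ) : Type _ := G → L

namespace CrossedProduct

open groupCohomology

attribute [local instance] Units.mulDistribMulActionRight

section Ring

variable {G L : Type*} [CommRing L] {f : G × G → Lˣ}

instance : AddCommGroup (CrossedProduct f) := inferInstanceAs (AddCommGroup (G → L))

instance {K : Type*} [Semiring K] [Module K L] : Module K (CrossedProduct f) :=
  inferInstanceAs (Module K (G → L))

instance [Nonempty G] [Nontrivial L] : Nontrivial (CrossedProduct f) :=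
  inferInstanceAs (Nontrivial (G → L))

instance : FunLike (CrossedProduct f) G L where
  coe a := a
  coe_injective _ _ h := h

@[ext]
theorem ext {a b : CrossedProduct f} (h : ∀ g, a g = b g) : a = b := DFunLike.ext a b h

@[simp]
theorem add_apply (a b : CrossedProduct f) (g : G) : (a + b) g = a g + b g := rfl

@[simp]
theorem zero_apply (g : G) : (0 : CrossedProduct f) g = 0 := rfl

@[simp]
theorem smul_apply {K : Type*} [Semiring K] [Module K L] (c : K) (a : CrossedProduct f) (g : G) :
    (c • a) g = c • a g := rfl

/-- The monomial `a * u g` of the crossed product. -/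
def single [DecidableEq G] (f : G × G → Lˣ) (g : G) (a : L) : CrossedProduct f :=
  (Pi.single g a : G → L)

theorem single_apply [DecidableEq G] (g : G) (a : L) (h : G) :
    single f g a h = if h = g then a else 0 :=
  Pi.single_apply g a h

theorem smul_single [DecidableEq G] {K : Type*} [Semiring K] [Module K L] (c : K) (g : G) (a : L) :
    c • single f g a = single f g (c • a) := by
  ext h
  rw [smul_apply, single_apply, single_apply, smul_ite, smul_zero]

theorem single_eq_zero_iff [DecidableEq G] {g : G} {a : L} : single f g a = 0 ↔ a = 0 :=
  Pi.single_eq_zero_iff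

variable [Group G]

/-- The unit is `u 1` only when the cocycle is normalised, whence the factor `(f (1, 1))⁻¹`. -/
instance [DecidableEq G] : One (CrossedProduct f) where
  one := single f 1 ↑(f (1, 1))⁻¹

theorem one_def [DecidableEq G] : (1 : CrossedProduct f) = single f 1 ↑(f (1, 1))⁻¹ := rfl

variable [Fintype G] [MulSemiringAction G L]

instance : Mul (CrossedProduct f) where
  mul a b := fun k ↦ ∑ g, a g * g • b (g⁻¹ * k) * f (g, g⁻¹ * k)

theorem mul_apply (a b : CrossedProduct f) (k : G) :
    (a * b) k = ∑ g, a g * g • b (g⁻¹ * k) * f (g, g⁻¹ * k) := rfl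

protected theorem mul_assoc [hf : Fact (IsMulCocycle₂ f)] (a b c : CrossedProduct f) :
    a * b * c = a * (b * c) := by
  ext k
  simp only [mul_apply, Finset.sum_mul, Finset.smul_sum, Finset.mul_sum]
  rw [Finset.sum_comm]
  refine Finset.sum_congr rfl fun g _ ↦ ?_
  rw [← Equiv.sum_comp (Equiv.mulLeft g)]
  refine Finset.sum_congr rfl fun h _ ↦ ?_
  have hcocycle := congrArg Units.val (hf.out g h (h⁻¹ * (g⁻¹ * k)))
  simp only [Units.val_mul, Units.coe_smul, mul_inv_cancel_left] at hcocycle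
  simp only [Equiv.coe_mulLeft, inv_mul_cancel_left, mul_inv_rev, mul_assoc, smul_mul', mul_smul]
    at hcocycle ⊢
  linear_combination (a g * g • b h * g • h • c (h⁻¹ * (g⁻¹ * k))) * hcocycle

variable [DecidableEq G]

theorem single_mul_apply (g : G) (a : L) (b : CrossedProduct f) (k : G) :
    (single f g a * b) k = a * g • b (g⁻¹ * k) * f (g, g⁻¹ * k) := by
  simp [mul_apply, single_apply]

theorem mul_single_apply (a : CrossedProduct f) (h : G) (b : L) (k : G) :
    (a * single f h b) k = a (k * h⁻¹) * (k * h⁻¹) • b * f (k * h⁻¹, h) := by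
  rw [mul_apply, Fintype.sum_eq_single (k * h⁻¹)]
  · simp [single_apply]
  · intro g hg
    have : g⁻¹ * k ≠ h := by rintro rfl; simp at hg
    simp [single_apply, this]

theorem single_mul_single (g h : G) (a b : L) :
    single f g a * single f h b = single f (g * h) (a * g • b * f (g, h)) := by
  ext k
  rw [single_mul_apply, single_apply, single_apply]
  by_cases hk : k = g * h
  · simp [hk]
  · have : g⁻¹ * k ≠ h := by rintro rfl; simp at hk
    simp [hk, this]

variable [hf : Fact (IsMulCocycle₂ f)]

instance : Ring (CrossedProduct f) where
  __ := (inferInstance : AddCommGroup (CrossedProduct f))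
  left_distrib a b c := by ext k; simp [mul_apply, mul_add, add_mul, Finset.sum_add_distrib]
  right_distrib a b c := by ext k; simp [mul_apply, add_mul, Finset.sum_add_distrib]
  zero_mul a := by ext k; simp [mul_apply]
  mul_zero a := by ext k; simp [mul_apply]
  mul_assoc := CrossedProduct.mul_assoc
  one_mul a := by
    ext k
    rw [one_def, single_mul_apply, inv_one, one_mul, map_one_fst_of_isMulCocycle₂ hf.out k,
      one_smul, mul_right_comm, Units.inv_mul, one_mul]
  mul_one a := by
    ext k
    rw [one_def, mul_single_apply, inv_one, mul_one, map_one_snd_of_isMulCocycle₂ hf.out k,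
      mul_assoc, Units.coe_smul, ← smul_mul', Units.inv_mul, smul_one, mul_one]

theorem single_one_mul_apply (a : L) (x : CrossedProduct f) (k : G) :
    (single f 1 a * x) k = a * f (1, 1) * x k := by
  rw [single_mul_apply, inv_one, one_mul, one_smul, map_one_fst_of_isMulCocycle₂ hf.out k]
  ring

theorem mul_single_one_apply (x : CrossedProduct f) (a : L) (k : G) :
    (x * single f 1 a) k = x k * k • (a * f (1, 1)) := by
  rw [mul_single_apply, inv_one, mul_one, map_one_snd_of_isMulCocycle₂ hf.out k, smul_mul',
    mul_assoc, Units.coe_smul]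

variable {K : Type*} [CommSemiring K] [Algebra K L] [SMulCommClass G K L]

instance : Algebra K (CrossedProduct f) :=
  Algebra.ofModule
    (fun c a b ↦ by ext k; simp [mul_apply, Finset.smul_sum])
    (fun c a b ↦ by ext k; simp [mul_apply, Finset.smul_sum, smul_comm])

end Ring

section Field

variable {G K L : Type*} [Group G] [Fintype G] [DecidableEq G] [Field K] [Field L]
  [MulSemiringAction G L] [Algebra K L] {f : G × G → Lˣ}
  [hf : Fact (IsMulCocycle₂ f)]

theorem smul_one_eq_single [SMulCommClass G K L] (c : K) :
    c • (1 : CrossedProduct f) = single f 1 (algebraMap K L c * ↑(f (1, 1))⁻¹) := by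
  ext k
  simp [one_def, single_apply, Algebra.smul_def]

theorem eq_single_one_of_forall_commute [FaithfulSMul G L] {x : CrossedProduct f}
    (hx : ∀ a, Commute (single f 1 a) x) : x = single f 1 (x 1) := by
  ext k
  rw [single_apply]
  split_ifs with hk
  · rw [hk]
  by_contra hxk
  refine hk (FaithfulSMul.eq_of_smul_eq_smul fun a : L ↦ ?_)
  have h := CrossedProduct.ext_iff.mp (hx (a * ↑(f (1, 1))⁻¹)).eq k
  rw [single_one_mul_apply, mul_single_one_apply, Units.inv_mul_cancel_right, mul_comm] at h
  rw [one_smul]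
  exact (mul_left_cancel₀ hxk h).symm

variable (K)

theorem center_eq_bot [IsGaloisGroup G K L] [SMulCommClass G K L] :
    Subalgebra.center K (CrossedProduct f) = ⊥ := by
  have : FaithfulSMul G L := IsGaloisGroup.faithful K
  refine eq_bot_iff.mpr fun x hx ↦ ?_
  rw [Subalgebra.mem_center_iff] at hx
  have hx1 : x = single f 1 (x 1) := eq_single_one_of_forall_commute fun a ↦ hx (single f 1 a)
  have hfixed (g : G) : g • (x 1 * f (1, 1)) = x 1 * f (1, 1) := by
    have h := CrossedProduct.ext_iff.mp (hx (single f g 1)) g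
    rw [hx1, single_one_mul_apply, mul_single_one_apply] at h
    simpa [single_apply] using h
  obtain ⟨c, hc⟩ := (IsGaloisGroup.isInvariant (G := G) (A := K)).isInvariant _ hfixed
  refine Algebra.mem_bot.mpr ⟨c, ?_⟩
  rw [Algebra.algebraMap_eq_smul_one, smul_one_eq_single, hc, Units.mul_inv_cancel_right, ← hx1]

theorem finrank_eq [IsGaloisGroup G K L] :
    Module.finrank K (CrossedProduct f) = Nat.card G ^ 2 := by
  have := IsGaloisGroup.finiteDimensional G K L
  calc Module.finrank K (CrossedProduct f) = Module.finrank K (G → L) := rfl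
    _ = Nat.card G ^ 2 := by
      rw [Module.finrank_pi_fintype, ← IsGaloisGroup.card_eq_finrank G K L]
      simp [sq]

end Field

section Valuation

variable {G L Γ₀ : Type*} [Field L] [LinearOrderedCommGroupWithZero Γ₀]
  {f : G × G → Lˣ} {v : Valuation L Γ₀} {w : G → Γ₀}

theorem exists_dominant_coeff [Finite G] (hw : ∀ g, w g ≠ 0)
    (hvw : ∀ g h x y, x ≠ 0 → v x * w g = v y * w h → g = h) {a : CrossedProduct f} (ha : a ≠ 0) :
    ∃ g, a g ≠ 0 ∧ ∀ h ≠ g, v (a h) * w h < v (a g) * w g := by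
  obtain ⟨k, hk⟩ : ∃ k, a k ≠ 0 := by
    by_contra! h
    exact ha (CrossedProduct.ext h)
  have : Nonempty G := ⟨k⟩
  obtain ⟨g, hg⟩ := Finite.exists_max fun h ↦ v (a h) * w h
  have hag : a g ≠ 0 := by
    intro h0
    have hle := hg k
    rw [h0, map_zero, zero_mul, le_zero_iff] at hle
    exact mul_ne_zero (v.ne_zero_iff.mpr hk) (hw k) hle
  exact ⟨g, hag, fun h hne ↦ (hg h).lt_of_ne
    fun heq ↦ hne (hvw g h _ _ hag heq.symm).symm⟩

-- Giving `∑ a g * u g` the value `max (v (a g) * w g)` extends `v`. The maximum is attained once,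
-- so the value of a product is that of the product of the two dominant monomials.
theorem noZeroDivisors_of_valuation [Group G] [Fintype G] [DecidableEq G]
    [MulSemiringAction G L] [Fact (IsMulCocycle₂ f)]
    (hv : ∀ (g : G) x, v (g • x) = v x) (hw : ∀ g, w g ≠ 0)
    (hf : ∀ g h, v (f (g, h)) * w (g * h) = w g * w h)
    (hvw : ∀ g h x y, x ≠ 0 → v x * w g = v y * w h → g = h) :
    NoZeroDivisors (CrossedProduct f) where
  eq_zero_or_eq_zero_of_mul_eq_zero {a b} hab := by
    by_contra! ⟨ha, hb⟩
    obtain ⟨g, hag, hg⟩ := exists_dominant_coeff hw hvw ha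
    obtain ⟨h, hbh, hh⟩ := exists_dominant_coeff hw hvw hb
    have hvterm (k : G) : v (a k * k • b (k⁻¹ * (g * h)) * f (k, k⁻¹ * (g * h))) * w (g * h) =
        v (a k) * w k * (v (b (k⁻¹ * (g * h))) * w (k⁻¹ * (g * h))) := by
      have := hf k (k⁻¹ * (g * h))
      rw [mul_inv_cancel_left] at this
      rw [map_mul, map_mul, hv, mul_assoc, this]
      ac_rfl
    have hterm : a g * g • b (g⁻¹ * (g * h)) * f (g, g⁻¹ * (g * h)) ≠ 0 := by
      rw [inv_mul_cancel_left]
      exact mul_ne_zero (mul_ne_zero hag ((smul_ne_zero_iff_ne g).mpr hbh)) (Units.ne_zero _)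
    have hlt (k : G) (hk : k ≠ g) :
        v (a k * k • b (k⁻¹ * (g * h)) * f (k, k⁻¹ * (g * h))) <
          v (a g * g • b (g⁻¹ * (g * h)) * f (g, g⁻¹ * (g * h))) := by
      rw [← mul_lt_mul_iff_left₀ (zero_lt_iff.mpr (hw (g * h))), hvterm, hvterm,
        inv_mul_cancel_left]
      have hne : k⁻¹ * (g * h) ≠ h := by
        rwa [ne_eq, inv_mul_eq_iff_eq_mul, mul_left_inj, eq_comm]
      exact mul_lt_mul'' (hg k hk) (hh _ hne) zero_le zero_le
    refine v.ne_zero_iff.mpr hterm ?_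
    rw [← v.map_sum_eq_of_lt (Finset.mem_univ g) (fun k hk ↦ hlt k (by simpa using hk)),
      ← mul_apply, hab, zero_apply, map_zero]

end Valuation

section SemidirectProduct

universe u v

variable {G : Type u} {L : Type v} {K N : Type*} [Group G] [Fintype G] [DecidableEq G] [Field K]
  [Field L] [MulSemiringAction G L] [Algebra K L] [Group N] {f : G × G → Lˣ}
  {φ : G →* MulAut N} {ρ : N →* Lˣ}

theorem exists_single_mul_single_eq_smul
    (hf : ∀ g h, ∃ c : K, algebraMap K L c = f (g, h)) (hρφ : ∀ g n, ρ (φ g n) = g • ρ n)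
    (x y : N ⋊[φ] G) :
    ∃ c : K, single f x.right (ρ x.left) * single f y.right (ρ y.left) =
      c • single f (x * y).right (ρ (x * y).left) := by
  obtain ⟨c, hc⟩ := hf x.right y.right
  refine ⟨c, ?_⟩
  rw [single_mul_single, smul_single, SemidirectProduct.mul_right, SemidirectProduct.mul_left,
    map_mul, hρφ, Algebra.smul_def, hc, Units.val_mul, Units.coe_smul, mul_comm]

theorem eq_one_of_smul_one_eq_single [SMulCommClass G K L] [Fact (IsMulCocycle₂ f)]
    (hf : ∀ g h, ∃ c : K, algebraMap K L c = f (g, h)) (hφ : ∀ n, (∀ g, φ g n = n) → n = 1)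
    (hρ : Function.Injective ρ) (hρφ : ∀ g n, ρ (φ g n) = g • ρ n) {x : N ⋊[φ] G} {c : K}
    (hx : c • (1 : CrossedProduct f) = single f x.right (ρ x.left)) : x = 1 := by
  rw [smul_one_eq_single] at hx
  have hright : x.right = 1 := by
    by_contra hne
    have h := CrossedProduct.ext_iff.mp hx x.right
    rw [single_apply, single_apply, if_neg hne, if_pos rfl] at h
    exact (ρ x.left).ne_zero h.symm
  have hscalar : ∃ e : K, (ρ x.left : L) = algebraMap K L e := by
    obtain ⟨d, hd⟩ := hf 1 1
    have h := CrossedProduct.ext_iff.mp hx 1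
    rw [hright, single_apply, single_apply, if_pos rfl, if_pos rfl, Units.val_inv_eq_inv_val, ← hd,
      ← map_inv₀, ← map_mul] at h
    exact ⟨_, h.symm⟩
  have hleft : x.left = 1 := by
    obtain ⟨e, he⟩ := hscalar
    refine hφ _ fun g ↦ hρ (Units.ext ?_)
    rw [hρφ, Units.coe_smul, he, smul_algebraMap]
  exact SemidirectProduct.ext hleft hright

theorem exists_semidirectProduct_hom_injective [SMulCommClass G K L] [Fact (IsMulCocycle₂ f)]
    {A : Type*} [DivisionRing A] [Algebra K A]
    (hf : ∀ g h, ∃ c : K, algebraMap K L c = f (g, h)) (hφ : ∀ n, (∀ g, φ g n = n) → n = 1)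
    (hρ : Function.Injective ρ) (hρφ : ∀ g n, ρ (φ g n) = g • ρ n)
    {j : CrossedProduct f →ₐ[K] A} (hj : Function.Injective j) :
    ∃ F : N ⋊[φ] G →* Aˣ ⧸ centralUnits K A, Function.Injective F := by
  have hne (x : N ⋊[φ] G) : j (single f x.right (ρ x.left)) ≠ 0 :=
    (map_ne_zero_iff j hj).mpr (single_eq_zero_iff.not.mpr (Units.ne_zero _))
  let u (x : N ⋊[φ] G) : Aˣ := Units.mk0 _ (hne x)
  refine ⟨MonoidHom.mk' (fun x ↦ u x) fun x y ↦ ?_, ?_⟩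
  · obtain ⟨c, hc⟩ := exists_single_mul_single_eq_smul hf hρφ x y
    refine mk_centralUnits_eq_mk_iff.mpr ⟨c, ?_⟩
    simp only [u, Units.val_mul, Units.val_mk0, ← map_smul, ← map_mul, hc]
  · rw [injective_iff_map_eq_one]
    intro x hx
    obtain ⟨c, hc⟩ := mk_centralUnits_eq_mk_iff.mp hx.symm
    rw [Units.val_one, Units.val_mk0, ← map_one j, ← map_smul] at hc
    exact eq_one_of_smul_one_eq_single hf hφ hρ hρφ (hj hc)

theorem exists_divisionRing_of_noZeroDivisors [IsGaloisGroup G K L] [SMulCommClass G K L]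
    [Fact (IsMulCocycle₂ f)] [NoZeroDivisors (CrossedProduct f)]
    (hf : ∀ g h, ∃ c : K, algebraMap K L c = f (g, h)) (hφ : ∀ n, (∀ g, φ g n = n) → n = 1)
    (hρ : Function.Injective ρ) (hρφ : ∀ g n, ρ (φ g n) = g • ρ n) :
    ∃ (A : Type (max u v)) (_ : DivisionRing A) (_ : Algebra K A), Subalgebra.center K A = ⊥ ∧
      Module.finrank K A = Nat.card G ^ 2 ∧
      ∃ F : N ⋊[φ] G →* Aˣ ⧸ centralUnits K A, Function.Injective F := by
  have := IsGaloisGroup.finiteDimensional G K L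
  have : FiniteDimensional K (CrossedProduct f) :=
    inferInstanceAs (FiniteDimensional K (G → L))
  have : IsDomain (CrossedProduct f) := NoZeroDivisors.to_isDomain _
  let : DivisionRing (CrossedProduct f) := divisionRingOfFiniteDimensional K _
  exact ⟨CrossedProduct f, inferInstance, inferInstance, center_eq_bot K, finrank_eq K,
    exists_semidirectProduct_hom_injective (j := AlgHom.id K _) hf hφ hρ hρφ Function.injective_id⟩

end SemidirectProduct

end CrossedProduct

section CarryCocycle

open groupCohomology WithZero

attribute [local instance] Units.mulDistribMulActionRight

/-- The 2-cocycle on `ℤ/mℤ` whose value at `(i, j)` is `q` to the power of the carry, `0` or `1`,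
in the addition `i + j` modulo `m`. Its crossed product is the cyclic algebra on `u` with
`u ^ m = q`. -/
def carryCocycle {M : Type*} [Monoid M] (m : ℕ) (q : M)
    (x : Multiplicative (ZMod m) × Multiplicative (ZMod m)) : M :=
  q ^ ((x.1.toAdd.val + x.2.toAdd.val) / m)

theorem mod_add_div_add_div (a b m : ℕ) : (a % m + b) / m + a / m = (a + b) / m := by
  rcases m.eq_zero_or_pos with rfl | hm
  · simp only [Nat.div_zero]
  · rw [← Nat.add_mul_div_right _ _ hm, add_right_comm, mul_comm, Nat.mod_add_div]

theorem isMulCocycle₂_carryCocycle {M : Type*} [CommGroup M] {m : ℕ} [NeZero m]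
    [MulDistribMulAction (Multiplicative (ZMod m)) M] {q : M}
    (hq : ∀ g : Multiplicative (ZMod m), g • q = q) : IsMulCocycle₂ (carryCocycle m q) := by
  intro g h k
  simp only [carryCocycle, smul_pow', hq, ← pow_add, toAdd_mul, ZMod.val_add]
  congr 1
  rw [mod_add_div_add_div, add_comm _ (_ % m), add_comm (_ / m), mod_add_div_add_div]
  congr 1
  ring

variable {m : ℕ} [NeZero m] {L : Type*} [Field L] {v : Valuation L ℤᵐ⁰}

theorem map_carryCocycle_pow_mul_exp {q : Lˣ} (hq : v q = exp (-1))
    (g h : Multiplicative (ZMod m)) :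
    v (carryCocycle m q (g, h) : Lˣ) ^ m * exp (-((g * h).toAdd.val : ℤ)) =
      exp (-(g.toAdd.val : ℤ)) * exp (-(h.toAdd.val : ℤ)) := by
  have hcarry : (m * ((g.toAdd.val + h.toAdd.val) / m : ℕ) + (g * h).toAdd.val : ℤ) =
      g.toAdd.val + h.toAdd.val := by
    rw [toAdd_mul, ZMod.val_add]
    exact_mod_cast Nat.div_add_mod _ m
  simp only [carryCocycle, Units.val_pow_eq_pow_val, map_pow, hq, ← exp_nsmul, ← exp_add, exp_inj,
    nsmul_eq_mul]
  linarith

theorem eq_of_map_pow_mul_exp_eq {g h : Multiplicative (ZMod m)} {x y : L} (hx : x ≠ 0)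
    (hxy : v x ^ m * exp (-(g.toAdd.val : ℤ)) = v y ^ m * exp (-(h.toAdd.val : ℤ))) : g = h := by
  have hvx : v x ≠ 0 := v.ne_zero_iff.mpr hx
  have hvy : v y ≠ 0 := by
    intro h0
    rw [h0, zero_pow (NeZero.ne m), zero_mul] at hxy
    exact mul_ne_zero (pow_ne_zero m hvx) exp_ne_zero hxy
  rw [← exp_log hvx, ← exp_log hvy, ← exp_nsmul, ← exp_nsmul, ← exp_add, ← exp_add, exp_inj,
    nsmul_eq_mul, nsmul_eq_mul] at hxy
  simpa using congrArg (Int.cast : ℤ → ZMod m) hxy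

-- The `m`-th power of `v` gives `u` the value `exp (-1)` instead of its `m`-th root.
theorem noZeroDivisors_crossedProduct_carryCocycle
    [MulSemiringAction (Multiplicative (ZMod m)) L] {q : Lˣ}
    [Fact (IsMulCocycle₂ (carryCocycle m q))]
    (hv : ∀ (g : Multiplicative (ZMod m)) x, v (g • x) = v x) (hq : v q = exp (-1)) :
    NoZeroDivisors (CrossedProduct (carryCocycle m q)) :=
  CrossedProduct.noZeroDivisors_of_valuation
    (v := v.map (powMonoidWithZeroHom (NeZero.ne m)) (pow_left_mono m))
    (w := fun g ↦ exp (-(g.toAdd.val : ℤ)))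
    (fun g x ↦ congrArg (· ^ m) (hv g x)) (fun _ ↦ exp_ne_zero)
    (map_carryCocycle_pow_mul_exp hq) (fun _ _ _ _ ↦ eq_of_map_pow_mul_exp_eq)

end CarryCocycle

section Valuation

open IsDedekindDomain
open scoped Pointwise

theorem intValuation_smul {G R : Type*} [Group G] [CommRing R] [IsDedekindDomain R]
    [MulSemiringAction G R] {P : HeightOneSpectrum R} {g : G}
    (hg : g • P.asIdeal = P.asIdeal) (x : R) :
    P.intValuation (g • x) = P.intValuation x := by
  rcases eq_or_ne x 0 with rfl | hx
  · rw [smul_zero]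
  have hspan : Ideal.span {g • x} = g • Ideal.span {x} := by
    rw [Ideal.smul_closure, Set.smul_set_singleton]
  have hmult : multiplicity (g • P.asIdeal) (g • Ideal.span {x}) =
      multiplicity P.asIdeal (Ideal.span {x}) :=
    multiplicity_map_eq (MulDistribMulAction.toMulEquiv (Ideal R) g)
  rw [P.intValuation_eq_exp_neg_multiplicity hx,
    P.intValuation_eq_exp_neg_multiplicity ((smul_ne_zero_iff_ne g).mpr hx), hspan, ← hmult, hg]

theorem valuation_smul {G R K : Type*} [Group G] [CommRing R] [IsDedekindDomain R] [Field K]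
    [Algebra R K] [IsFractionRing R K] [MulSemiringAction G R] [MulSemiringAction G K]
    [SMulDistribClass G R K] {P : HeightOneSpectrum R} {g : G}
    (hg : g • P.asIdeal = P.asIdeal) (x : K) :
    P.valuation K (g • x) = P.valuation K x := by
  obtain ⟨a, b, -, rfl⟩ := IsFractionRing.div_surjective (A := R) x
  simp only [smul_div₀', ← algebraMap.smul', map_div₀, HeightOneSpectrum.valuation_of_algebraMap,
    intValuation_smul hg]

end Valuation

section CyclotomicValuation

open IsDedekindDomain WithZero NumberField
open scoped Pointwise

variable {n : ℕ} [NeZero n] {L : Type*} [Field L] [NumberField L]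
  [IsCyclotomicExtension {n} ℚ L]

theorem valuation_natCast_of_liesOver {q : ℕ} [hq : Fact q.Prime] (hqn : ¬ q ∣ n)
    (P : HeightOneSpectrum (𝓞 L)) [hP : P.asIdeal.LiesOver (Ideal.span {(q : ℤ)})] :
    P.valuation L q = exp (-1) := by
  have hq0 : (q : ℤ) ≠ 0 := mod_cast hq.out.ne_zero
  let v : HeightOneSpectrum ℤ := ⟨Ideal.span {(q : ℤ)}, inferInstance, by simpa using hq0⟩
  have : P.asIdeal.LiesOver v.asIdeal := hP
  have hram : v.asIdeal.ramificationIdx' P.asIdeal = 1 := by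
    rw [Ideal.ramificationIdx'_eq_ramificationIdx _ _ v.ne_bot]
    exact IsCyclotomicExtension.Rat.ramificationIdx_eq_of_not_dvd q L P.asIdeal hqn
  calc P.valuation L q = P.intValuation (algebraMap ℤ (𝓞 L) q) := by
        rw [← HeightOneSpectrum.valuation_of_algebraMap (K := L)]
        simp only [algebraMap_int_eq, map_natCast]
    _ = exp (-1) := by
        rw [← HeightOneSpectrum.intValuation_liesOver v P, hram, pow_one,
          v.intValuation_singleton hq0 rfl]

theorem mem_stabilizer_of_galEquivZMod_eq_natCast {q : ℕ} [hq : Fact q.Prime] (hqn : ¬ q ∣ n)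
    (P : Ideal (𝓞 L)) [P.IsMaximal] [P.LiesOver (Ideal.span {(q : ℤ)})] {σ : Gal(L/ℚ)}
    (hσ : (IsCyclotomicExtension.Rat.galEquivZMod n L σ : ZMod n) = q) :
    σ ∈ MulAction.stabilizer Gal(L/ℚ) P := by
  have hcop : q.Coprime n := hq.out.coprime_iff_not_dvd.mpr hqn
  have hσ' : IsCyclotomicExtension.Rat.galEquivZMod n L σ = ZMod.unitOfCoprime q hcop :=
    Units.ext hσ
  have hstab := IsCyclotomicExtension.Rat.galEquivZMod_stabilizer n L q P hcop
  rw [← hσ', MulEquiv.mapSubgroup_apply] at hstab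
  exact (Subgroup.mem_map_iff_mem (MulEquiv.injective _)).mp
    (hstab ▸ Subgroup.mem_zpowers _)

theorem exists_valuation_natCast_eq_and_zpowers_invariant (n : ℕ) [NeZero n] {L : Type*} [Field L]
    [NumberField L] [IsCyclotomicExtension {n} ℚ L] (σ : Gal(L/ℚ)) :
    ∃ (q : ℕ) (v : Valuation L ℤᵐ⁰),
      v q = exp (-1) ∧ ∀ τ ∈ Subgroup.zpowers σ, ∀ x, v (τ x) = v x := by
  obtain ⟨q, hnq, hq, hqσ⟩ := Nat.forall_exists_prime_gt_and_eq_mod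
    (IsCyclotomicExtension.Rat.galEquivZMod n L σ).isUnit n
  have : Fact q.Prime := ⟨hq⟩
  have hqn : ¬ q ∣ n := Nat.not_dvd_of_pos_of_lt (NeZero.pos n) hnq
  obtain ⟨P, _, _⟩ := (Ideal.span {(q : ℤ)}).exists_maximal_ideal_liesOver_of_isIntegral
    (S := 𝓞 L)
  have hP : P ≠ ⊥ := Ideal.ne_bot_of_liesOver_of_ne_bot (p := Ideal.span {(q : ℤ)})
    (by simp [hq.ne_zero]) P
  let Q : HeightOneSpectrum (𝓞 L) := ⟨P, inferInstance, hP⟩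
  have : Q.asIdeal.LiesOver (Ideal.span {(q : ℤ)}) := ‹P.LiesOver _›
  have hσ : Subgroup.zpowers σ ≤ MulAction.stabilizer Gal(L/ℚ) Q.asIdeal :=
    Subgroup.zpowers_le.mpr (mem_stabilizer_of_galEquivZMod_eq_natCast hqn P hqσ.symm)
  exact ⟨q, Q.valuation L, valuation_natCast_of_liesOver hqn Q, fun τ hτ ↦ valuation_smul (hσ hτ)⟩

end CyclotomicValuation

section Balanced

theorem eq_one_of_pow_eq_one_of_isNilpotent_sub_one {R : Type*} [CommRing R] {c : R} {m : ℕ}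
    (hm : IsUnit (m : R)) (hcm : c ^ m = 1) (hc : IsNilpotent (c - 1)) : c = 1 := by
  have hsum : IsUnit (∑ i ∈ Finset.range m, c ^ i) := by
    have hsub : ∑ i ∈ Finset.range m, c ^ i - m = ∑ i ∈ Finset.range m, (c ^ i - 1) := by
      simp
    obtain ⟨d, hd⟩ : c - 1 ∣ ∑ i ∈ Finset.range m, (c ^ i - 1) :=
      Finset.dvd_sum fun i _ ↦ sub_one_dvd_pow_sub_one c i
    have hnil : IsNilpotent (∑ i ∈ Finset.range m, c ^ i - m) := by
      rw [hsub, hd]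
      exact (Commute.all _ _).isNilpotent_mul_right hc
    rw [← add_sub_cancel (m : R) (∑ i ∈ Finset.range m, c ^ i)]
    exact hnil.isUnit_add_left_of_commute hm (Commute.all _ _)
  refine sub_eq_zero.mp (hsum.mul_right_eq_zero.mp ?_)
  rw [geom_sum_mul, hcm, sub_self]

theorem isUnit_sub_one_of_isBalanced {n : ℕ} [NeZero n] (hn : ¬ 3 ∣ n)
    {χ : Multiplicative (ZMod 3) →* (ZMod n)ˣ} (hχ : IsBalanced n χ) :
    IsUnit ((χ (Multiplicative.ofAdd 1) : ZMod n) - 1) := by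
  set c : ZMod n := (χ (Multiplicative.ofAdd 1) : ZMod n) - 1 with hc
  rw [← ZMod.natCast_zmod_val c, ZMod.isUnit_iff_coprime]
  refine Nat.coprime_of_dvd fun p hp hpc hpn ↦ ?_
  let π := ZMod.castHom (Nat.ordProj_dvd n p) (ZMod (p ^ n.factorization p))
  have hnil : IsNilpotent (π (χ (Multiplicative.ofAdd 1)) - 1) := by
    rw [← map_one π, ← map_sub, ← hc, ← ZMod.natCast_zmod_val c, map_natCast]
    refine ⟨n.factorization p, ?_⟩
    rw [← Nat.cast_pow, ZMod.natCast_eq_zero_iff]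
    exact pow_dvd_pow_of_dvd hpc _
  have hthree : IsUnit ((3 : ℕ) : ZMod (p ^ n.factorization p)) := by
    rw [ZMod.isUnit_iff_coprime]
    exact Nat.Coprime.pow_right _ (Nat.prime_three.coprime_iff_not_dvd.mpr fun h ↦ hn (h.trans hpn))
  have hcube : π (χ (Multiplicative.ofAdd 1)) ^ 3 = 1 := by
    rw [← map_pow, ← Units.val_pow_eq_pow_val, ← map_pow,
      show (Multiplicative.ofAdd 1 : Multiplicative (ZMod 3)) ^ 3 = 1 by decide, map_one,
      Units.val_one, map_one]
  have hone := eq_one_of_pow_eq_one_of_isNilpotent_sub_one hthree hcube hnil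
  have : (Multiplicative.ofAdd 1 : Multiplicative (ZMod 3)) = 1 :=
    hχ p hp hpn (Units.ext (hone.trans (by simp)))
  exact absurd this (by decide)

end Balanced

section ZModAction

open IsCyclotomicExtension.Rat Multiplicative

theorem map_mem_zpowers_map_ofAdd_one {m : ℕ} {H : Type*} [Group H]
    (F : Multiplicative (ZMod m) →* H) (g : Multiplicative (ZMod m)) :
    F g ∈ Subgroup.zpowers (F (ofAdd 1)) := by
  refine ⟨g.toAdd.cast, ?_⟩
  simp only [← map_zpow, ← ofAdd_zsmul, zsmul_one, ZMod.intCast_zmod_cast, ofAdd_toAdd]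

theorem eq_one_of_forall_zmodAction_eq {m n : ℕ} {χ : Multiplicative (ZMod m) →* (ZMod n)ˣ}
    (hχ : IsUnit ((χ (ofAdd 1) : ZMod n) - 1)) {t : Multiplicative (ZMod n)}
    (ht : ∀ g, (zmodAction n).comp χ g t = t) : t = 1 := by
  have h : (χ (ofAdd 1) : ZMod n) * t.toAdd = t.toAdd := congrArg toAdd (ht (ofAdd 1))
  refine toAdd.injective (hχ.mul_right_eq_zero.mp ?_)
  rw [sub_mul, one_mul, h, sub_self]

theorem exists_hom_units_injective_of_isPrimitiveRoot {n : ℕ} [NeZero n] {R : Type*} [CommRing R]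
    {ζ : R} (hζ : IsPrimitiveRoot ζ n) :
    ∃ ρ : Multiplicative (ZMod n) →* Rˣ, Function.Injective ρ := by
  have hζ' : IsPrimitiveRoot (hζ.isUnit (NeZero.ne n)).unit n := hζ.isUnit_unit (NeZero.ne n)
  exact ⟨(Subgroup.zpowers _).subtype.comp hζ'.zmodEquivZPowers.toMultiplicativeLeft.toMonoidHom,
    Subtype.val_injective.comp (MulEquiv.injective _)⟩

theorem zmodAction_apply_eq_pow_val {n : ℕ} [NeZero n] (u : (ZMod n)ˣ)
    (t : Multiplicative (ZMod n)) : zmodAction n u t = t ^ (u : ZMod n).val := by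
  refine toAdd.injective ?_
  rw [toAdd_pow, nsmul_eq_mul, ZMod.natCast_zmod_val]
  rfl

theorem map_zmodAction_galEquivZMod {n : ℕ} [NeZero n] {L : Type*} [Field L] [NumberField L]
    [IsCyclotomicExtension {n} ℚ L] (ρ : Multiplicative (ZMod n) →* Lˣ) (σ : Gal(L/ℚ))
    (t : Multiplicative (ZMod n)) : (ρ (zmodAction n (galEquivZMod n L σ) t) : L) = σ (ρ t) := by
  have ht : (ρ t : L) ^ n = 1 := by
    rw [← Units.val_pow_eq_pow_val, ← map_pow, ← ofAdd_toAdd t, ← ofAdd_nsmul,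
      nsmul_eq_mul, CharP.cast_eq_zero, zero_mul, ofAdd_zero, map_one, Units.val_one]
  rw [galEquivZMod_apply_of_pow_eq n L σ ht, zmodAction_apply_eq_pow_val, map_pow,
    Units.val_pow_eq_pow_val]

end ZModAction

section CyclotomicAlgebra

open CrossedProduct groupCohomology IsCyclotomicExtension.Rat Multiplicative WithZero

attribute [local instance] Units.mulDistribMulActionRight

universe u

theorem exists_divisionRing_of_isCyclotomicExtension {m n : ℕ} [NeZero m] [NeZero n]
    (L : Type u) [Field L] [NumberField L] [IsCyclotomicExtension {n} ℚ L]
    {χ : Multiplicative (ZMod m) →* (ZMod n)ˣ} (hχ : Function.Injective χ)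
    (hunit : IsUnit ((χ (ofAdd 1) : ZMod n) - 1)) :
    ∃ (K A : Type u) (_ : Field K) (_ : NumberField K) (_ : DivisionRing A) (_ : Algebra K A),
      Subalgebra.center K A = ⊥ ∧ Module.finrank K A = m ^ 2 ∧
      ∃ F : Multiplicative (ZMod n) ⋊[(zmodAction n).comp χ] Multiplicative (ZMod m) →*
        Aˣ ⧸ centralUnits K A, Function.Injective F := by
  let τ : Multiplicative (ZMod m) →* Gal(L/ℚ) := (galEquivZMod n L).symm.toMonoidHom.comp χ
  have hτ (g) : galEquivZMod n L (τ g) = χ g := (galEquivZMod n L).apply_symm_apply (χ g)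
  let : MulSemiringAction (Multiplicative (ZMod m)) L := MulSemiringAction.compHom L τ
  have : FaithfulSMul (Multiplicative (ZMod m)) L :=
    ⟨fun h ↦ hχ ((galEquivZMod n L).symm.injective (AlgEquiv.ext h))⟩
  let K := FixedPoints.subfield (Multiplicative (ZMod m)) L
  have : NumberField K := { to_finiteDimensional := FiniteDimensional.left ℚ K L }
  obtain ⟨q, v, hvq, hv⟩ := exists_valuation_natCast_eq_and_zpowers_invariant n (τ (ofAdd 1))
  let qL : Lˣ := Units.mk0 (q : L) (v.ne_zero_iff.mp (hvq ▸ exp_ne_zero))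
  have : Fact (IsMulCocycle₂ (carryCocycle m qL)) :=
    ⟨isMulCocycle₂_carryCocycle fun g ↦ Units.ext (map_natCast (τ g) q)⟩
  have : NoZeroDivisors (CrossedProduct (carryCocycle m qL)) :=
    noZeroDivisors_crossedProduct_carryCocycle
      (fun g ↦ hv _ (map_mem_zpowers_map_ofAdd_one τ g)) hvq
  have hcocycle (g h) : ∃ c : K, algebraMap K L c = carryCocycle m qL (g, h) :=
    ⟨q ^ ((g.toAdd.val + h.toAdd.val) / m), by simp [carryCocycle, qL]⟩
  obtain ⟨ρ, hρ⟩ := exists_hom_units_injective_of_isPrimitiveRoot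
    (IsCyclotomicExtension.zeta_spec n ℚ L)
  have hρχ (g t) : ρ ((zmodAction n).comp χ g t) = g • ρ t :=
    Units.ext <| by
      rw [MonoidHom.comp_apply, ← hτ, map_zmodAction_galEquivZMod]
      rfl
  obtain ⟨A, _, _, hcenter, hrank, hF⟩ := exists_divisionRing_of_noZeroDivisors hcocycle
    (fun _ ↦ eq_one_of_forall_zmodAction_eq hunit) hρ hρχ
  rw [Nat.card_congr toAdd, Nat.card_zmod] at hrank
  exact ⟨K, A, inferInstance, inferInstance, inferInstance, inferInstance, hcenter, hrank, hF⟩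

-- Instance search finds the `ℚ`-algebra structure `DivisionRing.toRatAlgebra` here, whereas
-- `CyclotomicField.isCyclotomicExtension` is about `CyclotomicField.algebra`.
instance (n : ℕ) [NeZero n] : IsCyclotomicExtension {n} ℚ (CyclotomicField n ℚ) := by
  convert CyclotomicField.isCyclotomicExtension n ℚ
  · rfl
  · exact Subsingleton.elim _ _

theorem stmt_7_general {m n : ℕ} [NeZero m] [NeZero n]
    (χ : Multiplicative (ZMod m) →* (ZMod n)ˣ) (hχ : Function.Injective χ)
    (hunit : IsUnit ((χ (ofAdd 1) : ZMod n) - 1)) :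
    ∃ (K A : Type) (_ : Field K) (_ : NumberField K) (_ : DivisionRing A) (_ : Algebra K A),
      Subalgebra.center K A = ⊥ ∧ Module.finrank K A = m ^ 2 ∧
      ∃ F : Multiplicative (ZMod n) ⋊[(zmodAction n).comp χ] Multiplicative (ZMod m) →*
        Aˣ ⧸ centralUnits K A, Function.Injective F :=
  exists_divisionRing_of_isCyclotomicExtension (CyclotomicField n ℚ) hχ hunit

end CyclotomicAlgebra

/-- Let `n > 1` be an integer divisible only by primes congruent to `1` modulo `3`, and let
`G = μ_n ⋊_χ μ₃` be a balanced semidirect product. Then there exist a number field `K` and a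
central division algebra `A` of dimension `9` over `K` (corresponding to a non-trivial
Severi–Brauer surface) such that the quotient group `Aˣ/Kˣ` contains a subgroup isomorphic
to `G`. -/
theorem stmt_7 (n : ℕ) (hn : 1 < n) (hdiv : ∀ p : ℕ, p.Prime → p ∣ n → p % 3 = 1)
    (χ : Multiplicative (ZMod 3) →* (ZMod n)ˣ) (hχ : IsBalanced n χ) :
    ∃ (D : CentralDivAlg)
      (f : (Multiplicative (ZMod n) ⋊[(zmodAction n).comp χ] Multiplicative (ZMod 3)) →* D.Q),
      Function.Injective f := by
  have : NeZero n := ⟨by lia⟩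
  have hinj : Function.Injective χ := fun _ _ h ↦
    hχ n.minFac (n.minFac_prime hn.ne') n.minFac_dvd (congrArg (Units.map _) h)
  have h3 : ¬ 3 ∣ n := fun h ↦ absurd (hdiv 3 Nat.prime_three h) (by decide)
  obtain ⟨K, A, _, _, _, _, hcenter, hrank, hF⟩ :=
    stmt_7_general χ hinj (isUnit_sub_one_of_isBalanced h3 hχ)
  exact ⟨⟨K, A, hcenter, hrank⟩, hF⟩
end

section
/- Let n ≥ 1 be an integer divisible only by primes congruent to 1 modulo 3, let G' = μ_n ⋊_χ μ_3 be a balanced semidirect product, and let G = μ_3 × G'. Then there exist a number field K and an associative unital K-algebra A which is a division ring, has center equal to K, and has dimension 9 over K, such that the quotient group Aˣ/Kˣ contains a subgroup isomorphic to G. -/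
/-!
Let `σ` be the Frobenius at a prime `q` of the `N`-th cyclotomic field `L` and `K` its fixed field.
If `q` has order `d` modulo `N`, then `L/K` is cyclic of degree `d`, generated by `σ`, and the
cyclic algebra `A = (L/K, σ, q) = ⨁ L yⁱ` (`i < d`), with `y x = σ(x) y` and `y ^ d = q`, is central
of dimension `d²`. Since `q` is unramified in `L`, some `σ`-invariant valuation `v` of `L` has value
group `ℤ` and `v q = 1` (written additively). Giving `y` the value `1 / d`, the nonzero terms of
`∑ xᵢ yⁱ` have distinct values modulo `ℤ`, so each nonzero element has a strictly dominant term and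
`A` has no zero divisors.

Suppose that `d` and `n` divide `N`, that `q ≡ 1` modulo `d`, and that `q` modulo `n` is the image
of the generator of `μ_d` under `χ`. Then `σ` fixes a primitive `d`-th root of unity `ω` and
satisfies `σ(z) = z ^ q` for a primitive `n`-th root of unity `z`. With a Kummer generator `t`,
`σ(t) = ω t`, the classes of `t`, `z`, `y` in `Aˣ/Kˣ` satisfy the relations of
`μ_d × (μ_n ⋊ μ_d)`. If `tⁱ zʲ yᵏ` is central, then `σ` fixes `tⁱ zʲ` and `σᵏ = 1`, which forces
the exponents to vanish because `q - 1` is invertible modulo `n`. A suitable `q` exists by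
Dirichlet's theorem; the modulus `N` carries an extra prime so that `q` can be given order exactly
`d` even when `χ` is not injective.
-/

open WithZero
open scoped TensorProduct

section CyclicAlgebra

variable {K L R : Type*} [Field K] [Field L] [Algebra K L] [Ring R] [Algebra K R]

/-- A realization in a `K`-algebra `R` of the defining relations of the cyclic algebra
`(L/K, σ, a)` of degree `d`: an embedding of `L` together with a `d`-th root of `a` that induces
`σ` on `L` by conjugation. -/
structure CyclicAlgebraRep (σ : Gal(L/K)) (d : ℕ) (a : K) (R : Type*) [Ring R] [Algebra K R] where
  embed : L →ₐ[K] R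
  root : R
  root_mul_embed : ∀ x, root * embed x = embed (σ x) * root
  root_pow : root ^ d = algebraMap K R a

/-- The multiplication of the cyclic algebra `(L/K, σ, a)` of degree `d` in the coordinates `x`
of `∑ i, x i * y ^ i`, where `y ^ d = a`; exponents are added in `Fin d`, that is, modulo `d`. -/
def cyclicMul (σ : Gal(L/K)) {d : ℕ} (a : K) (x x' : Fin d → L) (k : Fin d) : L :=
  ∑ p : Fin d × Fin d with p.1 + p.2 = k,
    a ^ ((p.1 + p.2 : ℕ) / d) • (x p.1 * (σ ^ (p.1 : ℕ)) (x' p.2))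

section Valuation
variable {σ : Gal(L/K)} {d : ℕ} {a : K} {v : Valuation L ℤᵐ⁰}

/-- The `d`-th power of the value of `x * y ^ i` under the extension to the cyclic algebra of a
valuation `v` of `L` with `v a = exp (-1)`, where `y ^ d = a`. -/
def monomialValue (v : Valuation L ℤᵐ⁰) {d : ℕ} (x : L) (i : Fin d) : ℤᵐ⁰ := v x ^ d * exp (-i : ℤ)

theorem monomialValue_ne_zero {x : L} (hx : x ≠ 0) (i : Fin d) : monomialValue v x i ≠ 0 := by
  simp [monomialValue, hx]

theorem eq_of_monomialValue_eq {x x' : L} (hx : x ≠ 0) {i i' : Fin d}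
    (h : monomialValue v x i = monomialValue v x' i') : i = i' := by
  have hx' : x' ≠ 0 := by
    rintro rfl
    exact monomialValue_ne_zero hx i (h.trans (by simp [monomialValue, i.pos.ne']))
  have hlog := congrArg log h
  rw [monomialValue, monomialValue, log_mul (by simp [hx]) exp_ne_zero,
    log_mul (by simp [hx']) exp_ne_zero, log_pow, log_pow, log_exp, log_exp, nsmul_eq_mul,
    nsmul_eq_mul] at hlog
  have hmod : (i : ℕ) ≡ i' [MOD d] := by
    rw [Nat.modEq_iff_dvd]
    exact ⟨log (v x') - log (v x), by linarith⟩
  exact Fin.ext (hmod.eq_of_lt_of_lt i.isLt i'.isLt)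

theorem exists_forall_monomialValue_lt {x : Fin d → L} (hx : x ≠ 0) :
    ∃ i₀, x i₀ ≠ 0 ∧ ∀ i ≠ i₀, monomialValue v (x i) i < monomialValue v (x i₀) i₀ := by
  obtain ⟨j, hj⟩ := Function.ne_iff.1 hx
  have : Nonempty (Fin d) := ⟨j⟩
  obtain ⟨i₀, hmax⟩ := Finite.exists_max fun i ↦ monomialValue v (x i) i
  have hi₀ : x i₀ ≠ 0 := by
    intro h
    refine monomialValue_ne_zero (v := v) hj j (le_zero_iff.1 ((hmax j).trans_eq ?_))
    simp [monomialValue, h, j.pos.ne']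
  exact ⟨i₀, hi₀, fun i hi ↦ (hmax i).lt_of_ne fun h ↦ hi (eq_of_monomialValue_eq hi₀ h.symm).symm⟩

theorem valuation_cyclicMul_term (hv : ∀ x, v (σ x) = v x) (ha : v (algebraMap K L a) = exp (-1))
    (x x' : L) (i j : Fin d) :
    v (a ^ ((i + j : ℕ) / d) • (x * (σ ^ (i : ℕ)) x')) ^ d =
      monomialValue v x i * monomialValue v x' j * exp (((i + j : ℕ) % d : ℕ) : ℤ) := by
  have hvpow (k : ℕ) : v ((σ ^ k) x') = v x' := by
    induction k with
    | zero => simp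
    | succ k ih => rw [pow_succ', AlgEquiv.mul_apply, hv, ih]
  have hexp : (d • (((i + j : ℕ) / d) • (-1)) : ℤ) = -i + -j + ((i + j : ℕ) % d : ℕ) := by
    have := Int.mul_ediv_add_emod (i + j : ℕ) d
    simp only [nsmul_eq_mul]
    push_cast at this ⊢
    linarith
  rw [Algebra.smul_def, map_mul, map_mul, hvpow, map_pow, map_pow, ha, mul_pow, mul_pow,
    ← exp_nsmul, ← exp_nsmul, hexp, exp_add, exp_add, monomialValue, monomialValue]
  ac_rfl

theorem cyclicMul_ne_zero [NeZero d] (hv : ∀ x, v (σ x) = v x)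
    (ha : v (algebraMap K L a) = exp (-1)) {x x' : Fin d → L} (hx : x ≠ 0) (hx' : x' ≠ 0) :
    cyclicMul σ a x x' ≠ 0 := by
  obtain ⟨i₀, hi₀, hi⟩ := exists_forall_monomialValue_lt (v := v) hx
  obtain ⟨j₀, hj₀, hj⟩ := exists_forall_monomialValue_lt (v := v) hx'
  intro h0
  have hdom := v.map_sum_eq_of_lt (s := {p : Fin d × Fin d | p.1 + p.2 = i₀ + j₀})
    (f := fun p ↦ a ^ ((p.1 + p.2 : ℕ) / d) • (x p.1 * (σ ^ (p.1 : ℕ)) (x' p.2)))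
    (j := (i₀, j₀)) (by simp) fun ⟨i, j⟩ hij ↦ ?_
  · have hvalue := valuation_cyclicMul_term hv ha (x i₀) (x' j₀) i₀ j₀
    rw [← hdom, ← cyclicMul, h0, Pi.zero_apply, map_zero, zero_pow (NeZero.ne d)] at hvalue
    exact mul_ne_zero (mul_ne_zero (monomialValue_ne_zero hi₀ i₀) (monomialValue_ne_zero hj₀ j₀))
      exp_ne_zero hvalue.symm
  · obtain ⟨hadd, hne⟩ : i + j = i₀ + j₀ ∧ (i = i₀ → j ≠ j₀) := by simpa using hij
    have hine : i ≠ i₀ := fun h ↦ hne h (by simpa [h] using hadd)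
    have hjne : j ≠ j₀ := fun h ↦ hine (by simpa [h] using hadd)
    have hmod : (i + j : ℕ) % d = (i₀ + j₀ : ℕ) % d := by rw [← Fin.val_add, hadd, Fin.val_add]
    rw [← pow_lt_pow_iff_left₀ zero_le zero_le (NeZero.ne d), valuation_cyclicMul_term hv ha,
      valuation_cyclicMul_term hv ha, hmod]
    exact mul_lt_mul_of_pos_right (mul_lt_mul'' (hi i hine) (hj j hjne) zero_le zero_le) exp_pos

end Valuation

namespace CyclicAlgebraRep

variable {σ : Gal(L/K)} {d : ℕ} {a : K}

/-- The realization of `(L/K, σ, a)` in the scalar extension of `Module.End K L` to a `K`-algebra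
containing a `d`-th root `α` of `a`. -/
def ofRoot {K' : Type*} [CommRing K'] [Algebra K K'] (hσ : σ ^ d = 1) {α : K'}
    (hα : α ^ d = algebraMap K K' a) : CyclicAlgebraRep σ d a (Module.End K L ⊗[K] K') where
  embed := Algebra.TensorProduct.includeLeft.comp (Algebra.lmul K L)
  root := σ.toLinearMap ⊗ₜ α
  root_mul_embed x := by
    simp only [AlgHom.comp_apply, Algebra.TensorProduct.includeLeft_apply,
      Algebra.TensorProduct.tmul_mul_tmul, mul_one, one_mul]
    congr 1
    ext l
    simp
  root_pow := by
    have hσ' : σ.toLinearMap ^ d = 1 := by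
      ext x
      have := congrArg (· x) hσ
      simpa [Module.End.pow_apply, ← AlgEquiv.coe_pow] using this
    rw [Algebra.TensorProduct.tmul_pow, hσ', hα, ← Algebra.TensorProduct.algebraMap_apply']

section General
variable (c : CyclicAlgebraRep σ d a R)

theorem root_pow_mul_embed (i : ℕ) (x : L) :
    c.root ^ i * c.embed x = c.embed ((σ ^ i) x) * c.root ^ i := by
  induction i with
  | zero => simp
  | succ i ih =>
    rw [pow_succ' c.root, mul_assoc, ih, ← mul_assoc, c.root_mul_embed, mul_assoc,
      pow_succ' σ, AlgEquiv.mul_apply]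

theorem isUnit_root [NeZero d] (ha : a ≠ 0) : IsUnit c.root := by
  rw [← isUnit_pow_iff (NeZero.ne d), c.root_pow]
  exact ha.isUnit.map (algebraMap K R)

/-- The element `∑ i, x i * y ^ i` with coordinates `x`, where `y` is the chosen root of `a`. -/
def sum : (Fin d → L) →ₗ[K] R where
  toFun x := ∑ i, c.embed (x i) * c.root ^ (i : ℕ)
  map_add' x x' := by simp [add_mul, Finset.sum_add_distrib]
  map_smul' k x := by simp [Finset.smul_sum]

theorem sum_apply (x : Fin d → L) : c.sum x = ∑ i, c.embed (x i) * c.root ^ (i : ℕ) := rfl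

theorem sum_single (i : Fin d) (x : L) : c.sum (Pi.single i x) = c.embed x * c.root ^ (i : ℕ) := by
  rw [sum_apply, Finset.sum_eq_single i (fun j _ hj ↦ by simp [hj]) (by simp), Pi.single_eq_same]

theorem sum_single_zero [NeZero d] (x : L) : c.sum (Pi.single 0 x) = c.embed x := by
  simp [sum_single]

theorem root_pow_eq_mod (k : ℕ) :
    c.root ^ k = algebraMap K R (a ^ (k / d)) * c.root ^ (k % d) := by
  conv_lhs => rw [← Nat.div_add_mod k d, pow_add, pow_mul, c.root_pow, ← map_pow]

theorem sum_mul_sum (x x' : Fin d → L) :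
    c.sum x * c.sum x' = c.sum (cyclicMul σ a x x') := by
  have hterm (p : Fin d × Fin d) :
      c.embed (x p.1) * c.root ^ (p.1 : ℕ) * (c.embed (x' p.2) * c.root ^ (p.2 : ℕ)) =
        c.embed (a ^ ((p.1 + p.2 : ℕ) / d) • (x p.1 * (σ ^ (p.1 : ℕ)) (x' p.2))) *
          c.root ^ ((p.1 + p.2 : Fin d) : ℕ) := by
    rw [mul_assoc, ← mul_assoc (c.root ^ _), root_pow_mul_embed, mul_assoc, ← pow_add,
      root_pow_eq_mod, Fin.val_add, ← Algebra.smul_def, map_smul, map_mul]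
    simp only [mul_smul_comm, smul_mul_assoc, mul_assoc]
  simp only [sum_apply c (cyclicMul σ a x x'), cyclicMul, map_sum, Finset.sum_mul]
  rw [sum_apply, sum_apply, Finset.sum_mul_sum, ← Finset.sum_product', Finset.univ_product_univ,
    ← Finset.sum_fiberwise_of_maps_to (fun p _ ↦ Finset.mem_univ (p.1 + p.2))]
  refine Finset.sum_congr rfl fun k _ ↦ Finset.sum_congr rfl fun p hp ↦ ?_
  rw [hterm, (Finset.mem_filter.1 hp).2]

/-- The subalgebra generated by `L` and the root of `a`. -/
def subalgebra [NeZero d] : Subalgebra K R :=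
  (LinearMap.range c.sum).toSubalgebra ⟨Pi.single 0 1, by rw [sum_single_zero, map_one]⟩ <| by
    rintro _ _ ⟨x, rfl⟩ ⟨x', rfl⟩
    exact ⟨_, (c.sum_mul_sum x x').symm⟩

theorem embed_mul_root_pow_mem [NeZero d] (x : L) (k : ℕ) :
    c.embed x * c.root ^ k ∈ c.subalgebra := by
  refine ⟨Pi.single ⟨k % d, Nat.mod_lt k (NeZero.pos d)⟩ (a ^ (k / d) • x), ?_⟩
  rw [sum_single, c.root_pow_eq_mod k, ← Algebra.smul_def, map_smul, smul_mul_assoc, mul_smul_comm]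

/-- The realization of `(L/K, σ, a)` in the subalgebra that it generates. -/
def restrict [NeZero d] : CyclicAlgebraRep σ d a c.subalgebra where
  embed := c.embed.codRestrict c.subalgebra fun x ↦ by simpa using c.embed_mul_root_pow_mem x 0
  root := ⟨c.root, by simpa using c.embed_mul_root_pow_mem 1 1⟩
  root_mul_embed x := Subtype.ext (c.root_mul_embed x)
  root_pow := Subtype.ext c.root_pow

theorem sum_restrict_surjective [NeZero d] : Function.Surjective c.restrict.sum := by
  rintro ⟨_, x, rfl⟩
  refine ⟨x, Subtype.ext ?_⟩
  simp [sum_apply, restrict]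
end General

/- The monomials in the root are eigenvectors of right multiplication by `t`, for the `L`-linear
structure given by left multiplication, with eigenvalues `(σ ^ i) t`. -/
theorem sum_injective [NeZero d] [Nontrivial R] (c : CyclicAlgebraRep σ d a R) (ha : a ≠ 0) {t : L}
    (ht : Function.Injective fun i : Fin d ↦ (σ ^ (i : ℕ)) t) : Function.Injective c.sum := by
  let _ : Module L R := Module.compHom R c.embed.toRingHom
  let mulRight : Module.End L R :=
    { toFun r := r * c.embed t
      map_add' r s := add_mul r s _
      map_smul' x r := mul_assoc _ r _ }
  have hli : LinearIndependent L fun i : Fin d ↦ c.root ^ (i : ℕ) :=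
    mulRight.eigenvectors_linearIndependent' _ ht _ fun i ↦
      ⟨Module.End.mem_eigenspace_iff.2 (c.root_pow_mul_embed i t),
        ((c.isUnit_root ha).pow _).ne_zero⟩
  refine (injective_iff_map_eq_zero c.sum).2 fun x hx ↦ funext ?_
  exact Fintype.linearIndependent_iff.1 hli x hx

theorem finrank_eq_sq [FiniteDimensional K L] {c : CyclicAlgebraRep σ d a R}
    (hc : Function.Bijective c.sum) (hd : Module.finrank K L = d) : Module.finrank K R = d ^ 2 := by
  rw [← (LinearEquiv.ofBijective c.sum hc).finrank_eq, Module.finrank_pi_fintype]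
  simp [hd, sq]

theorem center_eq_bot [NeZero d] {c : CyclicAlgebraRep σ d a R} (hc : Function.Bijective c.sum)
    (ha : a ≠ 0) (hfix : ∀ x, σ x = x → x ∈ (algebraMap K L).range) {t : L}
    (ht : Function.Injective fun i : Fin d ↦ (σ ^ (i : ℕ)) t) : Subalgebra.center K R = ⊥ := by
  refine eq_bot_iff.2 fun r hr ↦ ?_
  rw [Subalgebra.mem_center_iff] at hr
  obtain ⟨x, rfl⟩ := hc.2 r
  have hleft : c.embed t * c.sum x = c.sum fun i ↦ t * x i := by
    simp [sum_apply, Finset.mul_sum, mul_assoc]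
  have hright : c.sum x * c.embed t = c.sum fun i ↦ (σ ^ (i : ℕ)) t * x i := by
    simp only [sum_apply, Finset.sum_mul, mul_assoc, root_pow_mul_embed, map_mul]
    refine Finset.sum_congr rfl fun i _ ↦ ?_
    rw [← mul_assoc, ← map_mul, mul_comm (x i), map_mul, mul_assoc]
  have hcoord (i : Fin d) : t * x i = (σ ^ (i : ℕ)) t * x i :=
    congrFun (hc.1 (hleft.symm.trans ((hr _).trans hright))) i
  have hx : x = Pi.single 0 (x 0) := by
    ext i
    rcases eq_or_ne i 0 with rfl | hi
    · simp
    · have hti : t ≠ (σ ^ (i : ℕ)) t := fun h ↦ hi (ht (by simpa using h.symm))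
      simpa only [Pi.single_eq_of_ne hi, mul_eq_mul_right_iff, hti, false_or] using hcoord i
  have hσx : σ (x 0) = x 0 := by
    have hroot := hr c.root
    rw [hx, sum_single_zero, c.root_mul_embed] at hroot
    have hembed := (c.isUnit_root ha).mul_right_cancel hroot
    rw [← sum_single_zero, ← sum_single_zero] at hembed
    exact Pi.single_injective 0 (hc.1 hembed)
  obtain ⟨k, hk⟩ := hfix _ hσx
  exact Algebra.mem_bot.2 ⟨k, by rw [hx, sum_single_zero, ← hk, c.embed.commutes]⟩

theorem noZeroDivisors [NeZero d] {c : CyclicAlgebraRep σ d a R} (hc : Function.Bijective c.sum)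
    {v : Valuation L ℤᵐ⁰} (hv : ∀ x, v (σ x) = v x) (ha : v (algebraMap K L a) = exp (-1)) :
    NoZeroDivisors R where
  eq_zero_or_eq_zero_of_mul_eq_zero {r s} hrs := by
    obtain ⟨x, rfl⟩ := hc.2 r
    obtain ⟨x', rfl⟩ := hc.2 s
    by_contra! h
    rw [sum_mul_sum, map_eq_zero_iff _ hc.1] at hrs
    exact cyclicMul_ne_zero hv ha (fun hx ↦ h.1 (by rw [hx, map_zero]))
      (fun hx' ↦ h.2 (by rw [hx', map_zero])) hrs

end CyclicAlgebraRep
end CyclicAlgebra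

section Presentation
variable {Q : Type*} [Group Q]

/-- The homomorphism from `ℤ/nℤ`, written multiplicatively, sending `1` to `g`. -/
def zmodPowersHom (n : ℕ) (g : Q) (hg : g ^ n = 1) : Multiplicative (ZMod n) →* Q :=
  (ZMod.lift n ⟨zmultiplesHom (Additive Q) (.ofMul g), by simpa using congrArg Additive.ofMul hg⟩ :
    ZMod n →+ Additive Q).toMultiplicativeLeft

theorem zmodPowersHom_natCast {n : ℕ} {g : Q} (hg : g ^ n = 1) (k : ℕ) :
    zmodPowersHom n g hg (.ofAdd (k : ZMod n)) = g ^ k := by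
  have hlift := ZMod.lift_coe n ⟨zmultiplesHom (Additive Q) (.ofMul g),
    by simpa using congrArg Additive.ofMul hg⟩ k
  simpa [zmodPowersHom] using congrArg Additive.toMul hlift

theorem exists_natCast_eq_ofAdd {n : ℕ} [NeZero n] (x : Multiplicative (ZMod n)) :
    ∃ k : ℕ, .ofAdd (k : ZMod n) = x :=
  ⟨x.toAdd.val, by simp⟩

theorem zmodAction_comp_natCast {d n w : ℕ} {χ : Multiplicative (ZMod d) →* (ZMod n)ˣ}
    (hχ : (χ (.ofAdd 1) : ZMod n) = w) (k b : ℕ) :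
    (zmodAction n).comp χ (.ofAdd (k : ZMod d)) (.ofAdd (b : ZMod n)) =
      Multiplicative.ofAdd ((w ^ k * b : ℕ) : ZMod n) := by
  have hχk : (χ (.ofAdd (k : ZMod d)) : ZMod n) = w ^ k := by
    rw [← hχ, ← Units.val_pow_eq_pow_val, ← map_pow, ← ofAdd_nsmul, nsmul_one]
  rw [Nat.cast_mul, Nat.cast_pow, ← hχk]
  rfl

theorem semiconjBy_pow_pow {M : Type*} [Monoid M] {y z : M} {w : ℕ} (h : SemiconjBy y z (z ^ w))
    (k b : ℕ) : SemiconjBy (y ^ k) (z ^ b) (z ^ (w ^ k * b)) := by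
  induction k with
  | zero => simp
  | succ k ih =>
    have := (h.pow_right (w ^ k * b)).mul_left ih
    rwa [← pow_succ', ← pow_mul, ← mul_assoc, ← pow_succ'] at this

variable {d n w : ℕ} [NeZero d] [NeZero n] {χ : Multiplicative (ZMod d) →* (ZMod n)ˣ} {y z : Q}

theorem zmodPowersHom_comp_zmodAction (hχ : (χ (.ofAdd 1) : ZMod n) = w) (hz : z ^ n = 1)
    (hy : y ^ d = 1) (hyz : SemiconjBy y z (z ^ w)) (g : Multiplicative (ZMod d)) :
    (zmodPowersHom n z hz).comp ((zmodAction n).comp χ g).toMonoidHom =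
      (MulAut.conj (zmodPowersHom d y hy g)).toMonoidHom.comp (zmodPowersHom n z hz) := by
  obtain ⟨k, rfl⟩ := exists_natCast_eq_ofAdd g
  refine MonoidHom.ext fun x ↦ ?_
  obtain ⟨b, rfl⟩ := exists_natCast_eq_ofAdd x
  simp only [MonoidHom.comp_apply, MulEquiv.toMonoidHom_eq_coe, MonoidHom.coe_coe,
    zmodPowersHom_natCast, MulAut.conj_apply]
  rw [← MonoidHom.comp_apply, zmodAction_comp_natCast hχ, zmodPowersHom_natCast,
    semiconjBy_pow_pow hyz k b, mul_inv_cancel_right]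

/-- The homomorphism from `μ_n ⋊ μ_d` sending the generators of the two factors to `z` and `y`. -/
def semidirectPowersHom (hχ : (χ (.ofAdd 1) : ZMod n) = w) (hz : z ^ n = 1) (hy : y ^ d = 1)
    (hyz : SemiconjBy y z (z ^ w)) :
    Multiplicative (ZMod n) ⋊[(zmodAction n).comp χ] Multiplicative (ZMod d) →* Q :=
  SemidirectProduct.lift (zmodPowersHom n z hz) (zmodPowersHom d y hy)
    (zmodPowersHom_comp_zmodAction hχ hz hy hyz)

theorem semidirectPowersHom_natCast (hχ : (χ (.ofAdd 1) : ZMod n) = w) (hz : z ^ n = 1)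
    (hy : y ^ d = 1) (hyz : SemiconjBy y z (z ^ w)) (j k : ℕ) :
    semidirectPowersHom hχ hz hy hyz ⟨.ofAdd (j : ZMod n), .ofAdd (k : ZMod d)⟩ =
      z ^ j * y ^ k := by
  rw [← zmodPowersHom_natCast hz, ← zmodPowersHom_natCast hy]
  rfl

theorem exists_injective_hom_of_relations {m : ℕ} [NeZero m] {t : Q}
    (hχ : (χ (.ofAdd 1) : ZMod n) = w) (ht : t ^ m = 1) (hz : z ^ n = 1) (hy : y ^ d = 1)
    (htz : Commute t z) (hty : Commute t y) (hyz : SemiconjBy y z (z ^ w))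
    (hfree : ∀ i j k : ℕ, t ^ i * (z ^ j * y ^ k) = 1 → m ∣ i ∧ n ∣ j ∧ d ∣ k) :
    ∃ f : (Multiplicative (ZMod m) ×
        (Multiplicative (ZMod n) ⋊[(zmodAction n).comp χ] Multiplicative (ZMod d))) →* Q,
      Function.Injective f := by
  let f := MonoidHom.noncommCoprod (zmodPowersHom m t ht) (semidirectPowersHom hχ hz hy hyz) <| by
    rintro g ⟨b, c⟩
    obtain ⟨i, rfl⟩ := exists_natCast_eq_ofAdd g
    obtain ⟨j, rfl⟩ := exists_natCast_eq_ofAdd b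
    obtain ⟨k, rfl⟩ := exists_natCast_eq_ofAdd c
    rw [semidirectPowersHom_natCast, zmodPowersHom_natCast]
    exact (htz.pow_pow i j).mul_right (hty.pow_pow i k)
  refine ⟨f, (injective_iff_map_eq_one f).2 ?_⟩
  rintro ⟨g, b, c⟩ h
  obtain ⟨i, rfl⟩ := exists_natCast_eq_ofAdd g
  obtain ⟨j, rfl⟩ := exists_natCast_eq_ofAdd b
  obtain ⟨k, rfl⟩ := exists_natCast_eq_ofAdd c
  rw [MonoidHom.noncommCoprod_apply, semidirectPowersHom_natCast, zmodPowersHom_natCast] at h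
  obtain ⟨hi, hj, hk⟩ := hfree i j k h
  rw [(ZMod.natCast_eq_zero_iff i m).2 hi, (ZMod.natCast_eq_zero_iff j n).2 hj,
    (ZMod.natCast_eq_zero_iff k d).2 hk]
  rfl

end Presentation

section UnitsModCenter
variable {K L A : Type*} [Field K] [Field L] [Algebra K L] [DivisionRing A] [Algebra K A]

theorem mem_centralUnits {u : Aˣ} : u ∈ centralUnits K A ↔ (u : A) ∈ (algebraMap K A).range := by
  refine ⟨fun ⟨k, hk⟩ ↦ ⟨k, by rw [← hk]; rfl⟩, fun ⟨k, hk⟩ ↦ ?_⟩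
  have hk0 : k ≠ 0 := by
    rintro rfl
    exact u.ne_zero (by rw [← hk, map_zero])
  exact ⟨Units.mk0 k hk0, Units.ext hk⟩

namespace CyclicAlgebraRep
variable {σ : Gal(L/K)} {d : ℕ} {a : K} (c : CyclicAlgebraRep σ d a A)

/-- The homomorphism `Lˣ → Aˣ ⧸ Kˣ` induced by the embedding of `L`. -/
def unitClass : Lˣ →* Aˣ ⧸ centralUnits K A :=
  (QuotientGroup.mk' _).comp (Units.map c.embed.toMonoidHom)

theorem unitClass_eq_one {u : Lˣ} (hu : (u : L) ∈ (algebraMap K L).range) : c.unitClass u = 1 := by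
  obtain ⟨k, hk⟩ := hu
  exact (QuotientGroup.eq_one_iff _).2 (mem_centralUnits.2 ⟨k, by simp [← hk]⟩)

variable [NeZero d] (ha : a ≠ 0)

/-- The class in `Aˣ ⧸ Kˣ` of the root of `a`. -/
noncomputable def rootClass : Aˣ ⧸ centralUnits K A := QuotientGroup.mk (c.isUnit_root ha).unit

theorem rootClass_pow : c.rootClass ha ^ d = 1 :=
  (QuotientGroup.eq_one_iff _).2 (mem_centralUnits.2 ⟨a, by simp [c.root_pow]⟩)

theorem semiconjBy_rootClass_unitClass (u : Lˣ) :
    SemiconjBy (c.rootClass ha) (c.unitClass u) (c.unitClass (Units.map (σ : L →* L) u)) :=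
  congrArg QuotientGroup.mk (Units.ext (c.root_mul_embed u))

theorem of_unitClass_mul_rootClass_pow_eq_one {u : Lˣ} {k : ℕ}
    (h : c.unitClass u * c.rootClass ha ^ k = 1) : σ u = u ∧ σ ^ k = 1 := by
  have hcentral : c.embed u * c.root ^ k ∈ (algebraMap K A).range :=
    mem_centralUnits.1 ((QuotientGroup.eq_one_iff
      (Units.map c.embed.toMonoidHom u * (c.isUnit_root ha).unit ^ k)).1 h)
  obtain ⟨b, hb⟩ := hcentral
  have hcomm (r : A) : c.embed u * c.root ^ k * r = r * (c.embed u * c.root ^ k) := by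
    rw [← hb, Algebra.commutes]
  have hroot := c.isUnit_root ha
  constructor
  · have := hcomm c.root
    rw [mul_assoc, ← pow_succ, ← mul_assoc c.root, c.root_mul_embed, mul_assoc, ← pow_succ'] at this
    exact c.embed.injective ((hroot.pow _).mul_right_cancel this).symm
  · ext x
    have := hcomm (c.embed x)
    rw [mul_assoc, root_pow_mul_embed, ← mul_assoc, ← mul_assoc, ← map_mul, ← map_mul,
      mul_comm x] at this
    exact mul_left_cancel₀ u.ne_zero (c.embed.injective ((hroot.pow _).mul_right_cancel this))

end CyclicAlgebraRep

theorem dvd_and_dvd_of_pow_mul_pow_eq {M : Type*} [CommGroup M] {d n q i j : ℕ} {ω z : M}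
    (hω : IsPrimitiveRoot ω d) (hz : IsPrimitiveRoot z n) (hdn : d.Coprime n)
    (hq : IsUnit (q - 1 : ZMod n)) (h : ω ^ i * z ^ (q * j) = z ^ j) : d ∣ i ∧ n ∣ j := by
  have hd : IsUnit (d : ZMod n) := (ZMod.isUnit_iff_coprime d n).2 hdn
  have hpow := congrArg (· ^ d) h
  simp only [mul_pow, ← pow_mul] at hpow
  rw [mul_comm i, pow_mul ω, hω.pow_eq_one, one_pow, one_mul, pow_eq_pow_iff_modEq, ← hz.eq_orderOf,
    ← ZMod.natCast_eq_natCast_iff] at hpow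
  have hj : (j : ZMod n) = 0 := by
    refine (hq.mul hd).mul_right_eq_zero.1 ?_
    push_cast at hpow
    linear_combination hpow
  rw [ZMod.natCast_eq_zero_iff] at hj
  rw [(hz.pow_eq_one_iff_dvd _).2 hj, (hz.pow_eq_one_iff_dvd _).2 (hj.mul_left q), mul_one] at h
  exact ⟨(hω.pow_eq_one_iff_dvd i).1 h, hj⟩

theorem mem_range_of_apply_eq_self [FiniteDimensional K L] [IsGalois K L] {σ : Gal(L/K)}
    (hσ : ∀ τ, τ ∈ Subgroup.zpowers σ) {x : L} (hx : σ x = x) : x ∈ (algebraMap K L).range := by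
  have hle : Subgroup.zpowers σ ≤ MulAction.stabilizer Gal(L/K) x := by
    simpa using hx
  exact (IsGalois.mem_range_algebraMap_iff_fixed x).2 fun τ ↦ hle (hσ τ)

theorem exists_kummer_generator {K L : Type} [Field K] [Field L] [Algebra K L]
    [FiniteDimensional K L] [IsGalois K L] {σ : Gal(L/K)} (hσ : ∀ τ, τ ∈ Subgroup.zpowers σ)
    {ω : Lˣ} (hω : ω ^ Module.finrank K L = 1) (hσω : σ ω = ω) : ∃ t : Lˣ, σ t = ω * t := by
  have : IsCyclic Gal(L/K) := ⟨σ, hσ⟩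
  obtain ⟨k, hk⟩ := mem_range_of_apply_eq_self hσ hσω
  have hnorm : Algebra.norm K (ω : L)⁻¹ = 1 := by
    have hkpow : k ^ Module.finrank K L = 1 := by
      refine (algebraMap K L).injective ?_
      rw [map_pow, hk, map_one, ← Units.val_pow_eq_pow_val, hω, Units.val_one]
    rw [← hk, ← map_inv₀, Algebra.norm_algebraMap, inv_pow, hkpow, inv_one]
  obtain ⟨t, ht⟩ := groupCohomology.exists_div_of_norm_eq_one hσ hnorm
  refine ⟨t, ?_⟩
  rw [div_eq_iff ((map_ne_zero σ).2 t.ne_zero)] at ht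
  conv_rhs => rw [ht, mul_inv_cancel_left₀ ω.ne_zero]

namespace CyclicAlgebraRep
variable {σ : Gal(L/K)} {d n q : ℕ} [NeZero d] {a : K}

theorem of_pow_mul_pow_mul_rootClass_pow_eq_one (c : CyclicAlgebraRep σ d a A) (ha : a ≠ 0)
    (hσ : orderOf σ = d) {ω t z : Lˣ} (hω : IsPrimitiveRoot ω d) (hσt : σ t = ω * t)
    (hz : IsPrimitiveRoot z n) (hσz : σ z = z ^ q) (hdn : d.Coprime n)
    (hq : IsUnit (q - 1 : ZMod n)) {i j k : ℕ}
    (h : c.unitClass t ^ i * (c.unitClass z ^ j * c.rootClass ha ^ k) = 1) :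
    d ∣ i ∧ n ∣ j ∧ d ∣ k := by
  rw [← mul_assoc, ← map_pow, ← map_pow, ← map_mul] at h
  obtain ⟨hfix, hpow⟩ := c.of_unitClass_mul_rootClass_pow_eq_one ha h
  have hroots : ω ^ i * z ^ (q * j) = z ^ j := by
    refine Units.ext (mul_left_cancel₀ (pow_ne_zero i t.ne_zero) ?_)
    simp only [Units.val_mul, Units.val_pow_eq_pow_val, map_mul, map_pow, hσt, hσz] at hfix ⊢
    rw [← hfix]
    ring
  obtain ⟨hi, hj⟩ := dvd_and_dvd_of_pow_mul_pow_eq hω hz hdn hq hroots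
  exact ⟨hi, hj, hσ ▸ orderOf_dvd_of_pow_eq_one hpow⟩

theorem exists_injective_hom [NeZero n] (c : CyclicAlgebraRep σ d a A) (ha : a ≠ 0)
    (hσ : orderOf σ = d) (hfix : ∀ x, σ x = x → x ∈ (algebraMap K L).range) {ω t z : Lˣ}
    (hω : IsPrimitiveRoot ω d) (hσω : σ ω = ω) (hσt : σ t = ω * t)
    (hz : IsPrimitiveRoot z n) (hσz : σ z = z ^ q) (hdn : d.Coprime n)
    (hq : IsUnit (q - 1 : ZMod n)) {χ : Multiplicative (ZMod d) →* (ZMod n)ˣ}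
    (hχ : (χ (.ofAdd 1) : ZMod n) = q) :
    ∃ f : (Multiplicative (ZMod d) × (Multiplicative (ZMod n) ⋊[(zmodAction n).comp χ]
        Multiplicative (ZMod d))) →* Aˣ ⧸ centralUnits K A, Function.Injective f := by
  have ht : c.unitClass t ^ d = 1 := by
    rw [← map_pow]
    refine c.unitClass_eq_one (hfix _ ?_)
    rw [Units.val_pow_eq_pow_val, map_pow, hσt, mul_pow, ← Units.val_pow_eq_pow_val ω,
      hω.pow_eq_one, Units.val_one, one_mul]
  have hz' : c.unitClass z ^ n = 1 := by rw [← map_pow, hz.pow_eq_one, map_one]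
  have hyt : Commute (c.rootClass ha) (c.unitClass t) := by
    have := c.semiconjBy_rootClass_unitClass ha t
    rwa [show Units.map (σ : L →* L) t = ω * t from Units.ext hσt, map_mul,
      c.unitClass_eq_one (hfix _ hσω), one_mul] at this
  have hyz : SemiconjBy (c.rootClass ha) (c.unitClass z) (c.unitClass z ^ q) := by
    rw [← map_pow, ← show Units.map (σ : L →* L) z = z ^ q from Units.ext (by simpa using hσz)]
    exact c.semiconjBy_rootClass_unitClass ha z
  exact exists_injective_hom_of_relations hχ ht hz' (c.rootClass_pow ha)
    ((Commute.all t z).map c.unitClass) hyt.symm hyz fun i j k h ↦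
      c.of_pow_mul_pow_mul_rootClass_pow_eq_one ha hσ hω hσt hz hσz hdn hq h

end CyclicAlgebraRep
end UnitsModCenter

section Arithmetic

theorem exists_orderOf_eq_zmod {p d : ℕ} [Fact p.Prime] (hp : p ≡ 1 [MOD d]) :
    ∃ u : ZMod p, orderOf u = d := by
  have hd : d ∣ p - 1 := (Nat.modEq_iff_dvd' (Fact.out : p.Prime).one_le).1 hp.symm
  obtain ⟨g, hg⟩ := IsCyclic.exists_ofOrder_eq_natCard (α := (ZMod p)ˣ)
  rw [Nat.card_eq_fintype_card, ZMod.card_units] at hg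
  rw [← hg] at hd
  have hg0 : orderOf g ≠ 0 := (orderOf_pos g).ne'
  refine ⟨(g ^ (orderOf g / d) : (ZMod p)ˣ), ?_⟩
  rw [orderOf_units, orderOf_pow_orderOf_div hg0 hd]

theorem exists_natCast_eq_and_orderOf_eq_lcm {m n : ℕ} [NeZero (m * n)] (h : m.Coprime n)
    (x : ZMod m) (y : ZMod n) : ∃ k : ℕ, (k : ZMod m) = x ∧ (k : ZMod n) = y ∧
      orderOf (k : ZMod (m * n)) = (orderOf x).lcm (orderOf y) := by
  let e := ZMod.chineseRemainder h
  obtain ⟨k, hk⟩ := ZMod.natCast_zmod_surjective (e.symm (x, y))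
  have hek : ((k : ZMod m), (k : ZMod n)) = (x, y) := by
    rw [← e.apply_symm_apply (x, y), ← hk, map_natCast]
    rfl
  obtain ⟨rfl, rfl⟩ := Prod.ext_iff.1 hek
  exact ⟨k, rfl, rfl, by rw [hk, ← Prod.orderOf_mk, ← e.symm.toMulEquiv.orderOf_eq]; rfl⟩

theorem exists_prime_orderOf_eq {d n : ℕ} [NeZero d] [NeZero n] (hdn : d.Coprime n) {w : ZMod n}
    (hw : w ^ d = 1) : ∃ N q : ℕ, N ≠ 0 ∧ d ∣ N ∧ n ∣ N ∧ q.Prime ∧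
      (q : ZMod d) = 1 ∧ (q : ZMod n) = w ∧ orderOf (q : ZMod N) = d := by
  have hdn0 : d * n ≠ 0 := mul_ne_zero (NeZero.ne d) (NeZero.ne n)
  obtain ⟨p, hp, hpgt, hpd⟩ := Nat.exists_prime_gt_modEq_one (d * n) (NeZero.ne d)
  have : Fact p.Prime := ⟨hp⟩
  have : NeZero (d * n) := ⟨hdn0⟩
  have : NeZero (d * n * p) := ⟨mul_ne_zero hdn0 hp.ne_zero⟩
  have hcop : (d * n).Coprime p := (Nat.coprime_of_lt_prime hdn0 hpgt hp).symm
  obtain ⟨u, hu⟩ := exists_orderOf_eq_zmod hpd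
  obtain ⟨r, hrd, hrn, hrord⟩ := exists_natCast_eq_and_orderOf_eq_lcm hdn 1 w
  obtain ⟨s, hsr, -, hsord⟩ := exists_natCast_eq_and_orderOf_eq_lcm hcop r u
  have hsN : orderOf (s : ZMod (d * n * p)) = d := by
    rw [hsord, hrord, orderOf_one, hu, Nat.lcm_one_left]
    exact Nat.lcm_eq_right (orderOf_dvd_of_pow_eq_one hw)
  have hs : IsUnit (s : ZMod (d * n * p)) :=
    (orderOf_pos_iff.1 (hsN.symm ▸ NeZero.pos d)).isUnit
  obtain ⟨q, -, hq, hqs⟩ := Nat.forall_exists_prime_gt_and_eq_mod hs 0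
  have hqr : (q : ZMod (d * n)) = r := by
    simpa [hsr] using congrArg (ZMod.castHom (dvd_mul_right (d * n) p) (ZMod (d * n))) hqs
  refine ⟨d * n * p, q, NeZero.ne _, dvd_mul_of_dvd_left (dvd_mul_right d n) p,
    dvd_mul_of_dvd_left (dvd_mul_left n d) p, hq, ?_, ?_, hqs ▸ hsN⟩
  · simpa [hrd] using congrArg (ZMod.castHom (dvd_mul_right d n) (ZMod d)) hqr
  · simpa [hrn] using congrArg (ZMod.castHom (dvd_mul_left n d) (ZMod n)) hqr

end Arithmetic

section Balanced

theorem eq_one_of_pow_eq_one_of_isNilpotent_sub_one_s8 {R : Type*} [CommRing R] {d : ℕ}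
    (hd : IsUnit (d : R)) {u : R} (hu : u ^ d = 1) (hnil : IsNilpotent (u - 1)) : u = 1 := by
  obtain ⟨s, hs⟩ : u - 1 ∣ ∑ i ∈ Finset.range d, (u ^ i - 1) :=
    Finset.dvd_sum fun i _ ↦ sub_one_dvd_pow_sub_one u i
  have hsum : IsUnit (∑ i ∈ Finset.range d, u ^ i) := by
    have hadd : ∑ i ∈ Finset.range d, u ^ i = (u - 1) * s + d := by simp [← hs]
    rw [hadd]
    exact ((Commute.all _ s).isNilpotent_mul_right hnil).isUnit_add_right_of_commute hd (.all _ _)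
  refine sub_eq_zero.1 (hsum.mul_right_eq_zero.1 ?_)
  rw [geom_sum_mul, hu, sub_self]

theorem IsBalanced.isUnit_sub_one {n : ℕ} [NeZero n] {χ : Multiplicative (ZMod 3) →* (ZMod n)ˣ}
    (hχ : IsBalanced n χ) (hn : Nat.Coprime 3 n) : IsUnit (χ (.ofAdd 1) - 1 : ZMod n) := by
  set w : (ZMod n)ˣ := χ (.ofAdd 1) with hw
  have hw3 : w ^ 3 = 1 := by rw [hw, ← map_pow]; exact map_one χ
  rw [← ZMod.natCast_zmod_val (w - 1 : ZMod n), ZMod.isUnit_iff_coprime]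
  refine Nat.coprime_of_dvd fun p hp hpw hpn ↦ ?_
  let π := ZMod.castHom (Nat.ordProj_dvd n p) (ZMod (p ^ n.factorization p))
  have hnil : IsNilpotent (π w - 1) := by
    obtain ⟨b, hb⟩ := hpw
    refine ⟨n.factorization p, ?_⟩
    rw [← map_one π, ← map_sub, ← ZMod.natCast_zmod_val (w - 1 : ZMod n), hb, map_natCast,
      ← Nat.cast_pow, mul_pow, Nat.cast_mul, ZMod.natCast_self, zero_mul]
  have h3 : IsUnit ((3 : ℕ) : ZMod (p ^ n.factorization p)) :=
    (ZMod.isUnit_iff_coprime _ _).2 ((hn.coprime_dvd_right hpn).pow_right _)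
  have hπw : π w = 1 := eq_one_of_pow_eq_one_of_isNilpotent_sub_one_s8 h3
    (by rw [← map_pow, ← Units.val_pow_eq_pow_val, hw3, Units.val_one, map_one]) hnil
  have : Multiplicative.ofAdd (1 : ZMod 3) = 1 := hχ p hp hpn (Units.ext (hπw.trans (by simp)))
  exact absurd this (by decide)

end Balanced

section Frobenius
open IsDedekindDomain NumberField

section Dedekind
variable {R F : Type*} [CommRing R] [IsDedekindDomain R] [Field F] [Algebra R F]
  [IsFractionRing R F] {v : HeightOneSpectrum R}

theorem intValuation_apply_le {e : R →+* R} (h : v.asIdeal ≤ v.asIdeal.comap e) (x : R) :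
    v.intValuation (e x) ≤ v.intValuation x := by
  rcases eq_or_ne x 0 with rfl | hx
  · simp
  rw [v.intValuation_if_neg hx, v.intValuation_le_pow_iff_mem]
  refine (Ideal.pow_right_mono h _).trans (Ideal.le_comap_pow e _) ?_
  rw [← v.intValuation_le_pow_iff_mem, v.intValuation_if_neg hx]

theorem intValuation_apply_eq {e : R ≃+* R} (h : v.asIdeal.comap (e : R →+* R) = v.asIdeal)
    (x : R) : v.intValuation (e x) = v.intValuation x := by
  have hsymm : v.asIdeal ≤ v.asIdeal.comap (e.symm : R →+* R) := fun y hy ↦ by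
    rw [← h, Ideal.mem_comap, Ideal.mem_comap]
    simpa using hy
  refine le_antisymm (intValuation_apply_le (e := (e : R →+* R)) h.ge x) ?_
  simpa using intValuation_apply_le hsymm (e x)

theorem valuation_apply_eq {e : R ≃+* R} (h : v.asIdeal.comap (e : R →+* R) = v.asIdeal)
    {σ : F →+* F} (hσ : ∀ y, σ (algebraMap R F y) = algebraMap R F (e y)) (x : F) :
    v.valuation F (σ x) = v.valuation F x := by
  obtain ⟨r, s, -, rfl⟩ := IsFractionRing.div_surjective (A := R) x
  simp only [map_div₀, hσ, v.valuation_of_algebraMap, intValuation_apply_eq h]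

end Dedekind

variable {L : Type*} [Field L] [NumberField L] {q : ℕ}

theorem valuation_natCast_eq_exp_neg_one {N : ℕ} [NeZero N] [IsCyclotomicExtension {N} ℚ L]
    (hq : q.Prime) (hqN : ¬ q ∣ N) (v : HeightOneSpectrum (𝓞 L))
    [hv : v.asIdeal.LiesOver (Ideal.span {(q : ℤ)})] : v.valuation L (q : L) = exp (-1 : ℤ) := by
  have : Fact q.Prime := ⟨hq⟩
  have hq0 : (q : ℤ) ≠ 0 := mod_cast hq.ne_zero
  let w : HeightOneSpectrum ℤ := ⟨Ideal.span {(q : ℤ)},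
    (Ideal.span_singleton_prime hq0).2 (Nat.prime_iff_prime_int.1 hq), by simpa using hq0⟩
  have : v.asIdeal.LiesOver w.asIdeal := hv
  have hram : w.asIdeal.ramificationIdx' v.asIdeal = 1 :=
    (Ideal.ramificationIdx'_eq_ramificationIdx _ _ w.ne_bot).trans
      (IsCyclotomicExtension.Rat.ramificationIdx_eq_of_not_dvd q L v.asIdeal (m := N) hqN)
  have hval := HeightOneSpectrum.intValuation_liesOver w v (q : ℤ)
  rw [hram, pow_one, w.intValuation_singleton hq0 rfl] at hval
  rw [hval, ← v.valuation_of_algebraMap (K := L)]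
  simp

theorem apply_eq_pow_of_isArithFrobAt {N : ℕ} {P : Ideal (𝓞 L)}
    [hP : P.LiesOver (Ideal.span {(q : ℤ)})] (hqN : ¬ q ∣ N) {σ : Gal(L/ℚ)}
    (hσ : IsArithFrobAt ℤ σ P) {ζ : L} (hζ : ζ ^ N = 1) : σ ζ = ζ ^ q := by
  have hN : N ≠ 0 := by
    rintro rfl
    exact hqN (dvd_zero q)
  let z : 𝓞 L := ⟨ζ, IsIntegral.of_pow hN.pos (hζ ▸ isIntegral_one)⟩
  have hNP : (N : 𝓞 L) ∉ P := fun h ↦ by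
    have : (N : ℤ) ∈ P.under ℤ := by simpa [Ideal.mem_comap] using h
    rw [← hP.over, Ideal.mem_span_singleton] at this
    exact hqN (mod_cast this)
  have hcard : Nat.card (ℤ ⧸ P.under ℤ) = q := by
    rw [← hP.over, Nat.card_congr (Int.quotientSpanNatEquivZMod q).toEquiv, Nat.card_zmod]
  have hz := hσ.apply_of_pow_eq_one (ζ := z) (m := N) (RingOfIntegers.ext hζ) hNP
  rw [hcard] at hz
  exact congrArg (algebraMap (𝓞 L) L) hz

variable (L) in
theorem exists_frobenius_and_valuation {N : ℕ} [NeZero N] [IsCyclotomicExtension {N} ℚ L]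
    (hq : q.Prime) (hqN : ¬ q ∣ N) :
    ∃ (σ : Gal(L/ℚ)) (v : Valuation L ℤᵐ⁰), (∀ x, v (σ x) = v x) ∧ v (q : L) = exp (-1 : ℤ) ∧
      ∀ ζ : L, ζ ^ N = 1 → σ ζ = ζ ^ q := by
  have : IsGalois ℚ L := IsCyclotomicExtension.isGalois {N} ℚ L
  have hq0 : Ideal.span {(q : ℤ)} ≠ ⊥ := by simpa using hq.ne_zero
  have : (Ideal.span {(q : ℤ)}).IsMaximal :=
    PrincipalIdealRing.isMaximal_of_irreducible (Nat.prime_iff_prime_int.1 hq).irreducible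
  obtain ⟨P, hP, hPq⟩ :=
    Ideal.exists_maximal_ideal_liesOver_of_isIntegral (S := 𝓞 L) (Ideal.span {(q : ℤ)})
  let v : HeightOneSpectrum (𝓞 L) := ⟨P, hP.isPrime, Ideal.ne_bot_of_liesOver_of_ne_bot hq0 P⟩
  have : Finite (𝓞 L ⧸ P) := Ideal.finiteQuotientOfFreeOfNeBot P v.ne_bot
  obtain ⟨σ, hσ⟩ := IsArithFrobAt.exists_of_isInvariant ℤ Gal(L/ℚ) P
  refine ⟨σ, v.valuation L, fun x ↦ ?_, ?_, fun ζ ↦ apply_eq_pow_of_isArithFrobAt hqN hσ⟩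
  · exact valuation_apply_eq (v := v) (e := MulSemiringAction.toRingEquiv _ (𝓞 L) σ)
      (σ := (σ : L →+* L)) hσ.comap_eq (fun _ ↦ rfl) x
  · have : v.asIdeal.LiesOver (Ideal.span {(q : ℤ)}) := hPq
    exact valuation_natCast_eq_exp_neg_one hq hqN v

theorem orderOf_eq_of_apply_eq_pow {F E : Type*} [Field F] [Field E] [Algebra F E] {N : ℕ}
    [NeZero N] [IsCyclotomicExtension {N} F E] {η : E} (hη : IsPrimitiveRoot η N) {σ : Gal(E/F)}
    {q : ℕ} (hσ : σ η = η ^ q) : orderOf σ = orderOf (q : ZMod N) := by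
  have hq : (hη.autToPow F σ : ZMod N) = q := by
    have hpow := hη.autToPow_spec F σ
    rw [hσ, (hη.isOfFinOrder (NeZero.ne N)).pow_eq_pow_iff_modEq, ← hη.eq_orderOf,
      ← ZMod.natCast_eq_natCast_iff] at hpow
    simpa using hpow
  rw [← hq, orderOf_units, orderOf_injective _ (hη.autToPow_injective F)]

theorem exists_intermediateField_isCyclic_generator {F E : Type*} [Field F] [Field E] [Algebra F E]
    [FiniteDimensional F E] (σ : Gal(E/F)) :
    ∃ (K : IntermediateField F E) (τ : Gal(E/K)), (∀ x, τ x = σ x) ∧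
      (∀ ρ, ρ ∈ Subgroup.zpowers τ) ∧ orderOf τ = orderOf σ := by
  let e := IntermediateField.subgroupEquivAlgEquiv (Subgroup.zpowers σ)
  refine ⟨IntermediateField.fixedField (Subgroup.zpowers σ), e ⟨σ, Subgroup.mem_zpowers σ⟩,
    fun _ ↦ rfl, fun ρ ↦ ?_, ?_⟩
  · obtain ⟨⟨_, k, rfl⟩, rfl⟩ := e.surjective ρ
    exact ⟨k, (map_zpow e ⟨σ, Subgroup.mem_zpowers σ⟩ k).symm⟩
  · rw [e.orderOf_eq, Subgroup.orderOf_mk]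

end Frobenius

section Existence

theorem injective_pow_apply_of_apply_eq_mul {K L : Type*} [Field K] [Field L] [Algebra K L]
    {σ : Gal(L/K)} {d : ℕ} {ω t : Lˣ} (hω : IsPrimitiveRoot ω d) (hσω : σ ω = ω)
    (hσt : σ t = ω * t) : Function.Injective fun i : Fin d ↦ (σ ^ (i : ℕ)) (t : L) := by
  have hpow (i : ℕ) : (σ ^ i) (t : L) = (ω ^ i * t : Lˣ) := by
    induction i with
    | zero => simp
    | succ i ih =>
      rw [pow_succ', AlgEquiv.mul_apply, ih]
      simp only [Units.val_mul, Units.val_pow_eq_pow_val, map_mul, map_pow, hσω, hσt]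
      ring
  intro i j h
  simp only [hpow, Units.val_inj, mul_left_inj] at h
  exact Fin.ext (hω.pow_inj i.isLt j.isLt h)

theorem CyclicAlgebraRep.exists_divisionRing {K L : Type*} {R : Type} [Field K] [Field L]
    [Algebra K L] [FiniteDimensional K L] [Ring R] [Nontrivial R] [Algebra K R] {σ : Gal(L/K)}
    {d : ℕ} [NeZero d] {a : K} (c : CyclicAlgebraRep σ d a R) (ha : a ≠ 0)
    (hd : Module.finrank K L = d) (hfix : ∀ x, σ x = x → x ∈ (algebraMap K L).range) {t : L}
    (ht : Function.Injective fun i : Fin d ↦ (σ ^ (i : ℕ)) t) {v : Valuation L ℤᵐ⁰}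
    (hv : ∀ x, v (σ x) = v x) (hva : v (algebraMap K L a) = exp (-1)) :
    ∃ (A : Type) (_ : DivisionRing A) (_ : Algebra K A), Nonempty (CyclicAlgebraRep σ d a A) ∧
      Subalgebra.center K A = ⊥ ∧ Module.finrank K A = d ^ 2 := by
  have hc : Function.Bijective c.restrict.sum :=
    ⟨c.restrict.sum_injective ha ht, c.sum_restrict_surjective⟩
  have hrank := finrank_eq_sq hc hd
  have : FiniteDimensional K c.subalgebra :=
    Module.finite_of_finrank_pos (hrank ▸ pow_pos (NeZero.pos d) 2)
  have : NoZeroDivisors c.subalgebra := noZeroDivisors hc hv hva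
  have : IsDomain c.subalgebra := NoZeroDivisors.to_isDomain _
  exact ⟨c.subalgebra, divisionRingOfFiniteDimensional K c.subalgebra, inferInstance, ⟨c.restrict⟩,
    center_eq_bot hc ha hfix ht, hrank⟩

theorem exists_cyclic_extension_frobenius {N q : ℕ} [NeZero N] (hq : q.Prime) (hqN : ¬ q ∣ N) :
    ∃ (K L : Type) (_ : Field K) (_ : NumberField K) (_ : Field L) (_ : Algebra K L)
      (_ : FiniteDimensional K L) (_ : IsGalois K L) (σ : Gal(L/K)) (v : Valuation L ℤᵐ⁰) (η : Lˣ),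
      (∀ τ, τ ∈ Subgroup.zpowers σ) ∧ orderOf σ = orderOf (q : ZMod N) ∧
      (∀ x, v (σ x) = v x) ∧ v (q : L) = exp (-1) ∧ IsPrimitiveRoot η N ∧ σ η = η ^ q := by
  let L := CyclotomicField N ℚ
  have : IsCyclotomicExtension {N} ℚ L := CyclotomicField.isCyclotomicExtension N ℚ
  have : NumberField L := IsCyclotomicExtension.numberField {N} ℚ L
  have : IsGalois ℚ L := IsCyclotomicExtension.isGalois {N} ℚ L
  have hη := IsCyclotomicExtension.zeta_spec N ℚ L
  obtain ⟨σ, v, hv, hvq, hσ⟩ := exists_frobenius_and_valuation L hq hqN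
  obtain ⟨K, τ, hτ, hgen, hord⟩ := exists_intermediateField_isCyclic_generator σ
  refine ⟨K, L, inferInstance, inferInstance, inferInstance, inferInstance, inferInstance,
    inferInstance, τ, v, (hη.isUnit (NeZero.ne N)).unit, hgen, ?_, fun x ↦ ?_, hvq,
    hη.isUnit_unit (NeZero.ne N), ?_⟩
  · exact hord.trans (orderOf_eq_of_apply_eq_pow hη (hσ _ hη.pow_eq_one))
  · rw [hτ, hv]
  · exact (hτ _).trans (hσ _ hη.pow_eq_one)

theorem exists_divisionRing_injective_hom {K L : Type} [Field K] [Field L] [Algebra K L]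
    [FiniteDimensional K L] [IsGalois K L] {σ : Gal(L/K)} {d n q : ℕ} [NeZero d] [NeZero n]
    (hgen : ∀ τ, τ ∈ Subgroup.zpowers σ) (hord : orderOf σ = d) {v : Valuation L ℤᵐ⁰}
    (hv : ∀ x, v (σ x) = v x) {a : K} (hva : v (algebraMap K L a) = exp (-1)) {ω z : Lˣ}
    (hω : IsPrimitiveRoot ω d) (hσω : σ ω = ω) (hz : IsPrimitiveRoot z n) (hσz : σ z = z ^ q)
    (hdn : d.Coprime n) (hq : IsUnit (q - 1 : ZMod n)) {χ : Multiplicative (ZMod d) →* (ZMod n)ˣ}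
    (hχ : (χ (.ofAdd 1) : ZMod n) = q) :
    ∃ (A : Type) (_ : DivisionRing A) (_ : Algebra K A),
      Subalgebra.center K A = ⊥ ∧ Module.finrank K A = d ^ 2 ∧
      ∃ f : (Multiplicative (ZMod d) × (Multiplicative (ZMod n) ⋊[(zmodAction n).comp χ]
        Multiplicative (ZMod d))) →* Aˣ ⧸ centralUnits K A, Function.Injective f := by
  have hrank : Module.finrank K L = d := by
    rw [← IsGalois.card_aut_eq_finrank, ← orderOf_eq_card_of_forall_mem_zpowers hgen, hord]
  have ha : a ≠ 0 := by
    rintro rfl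
    exact exp_ne_zero (hva.symm.trans (by simp))
  have hfix (x : L) (hx : σ x = x) : x ∈ (algebraMap K L).range :=
    mem_range_of_apply_eq_self hgen hx
  obtain ⟨t, hσt⟩ := exists_kummer_generator hgen (hrank ▸ hω.pow_eq_one) hσω
  obtain ⟨α, hα⟩ := IsAlgClosed.exists_pow_nat_eq (algebraMap K (AlgebraicClosure K) a)
    (NeZero.pos d)
  obtain ⟨A, _, _, ⟨c⟩, hcenter, hdim⟩ :=
    (CyclicAlgebraRep.ofRoot (hord ▸ pow_orderOf_eq_one σ) hα).exists_divisionRing ha hrank hfix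
      (injective_pow_apply_of_apply_eq_mul hω hσω hσt) hv hva
  exact ⟨A, _, _, hcenter, hdim, c.exists_injective_hom ha hord hfix hω hσω hσt hz hσz hdn hq hχ⟩

theorem stmt_8_general (d n : ℕ) [NeZero d] [NeZero n] (hdn : d.Coprime n)
    (χ : Multiplicative (ZMod d) →* (ZMod n)ˣ) (hχ : IsUnit (χ (.ofAdd 1) - 1 : ZMod n)) :
    ∃ (K A : Type) (_ : Field K) (_ : NumberField K) (_ : DivisionRing A) (_ : Algebra K A),
      Subalgebra.center K A = ⊥ ∧ Module.finrank K A = d ^ 2 ∧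
      ∃ f : (Multiplicative (ZMod d) × (Multiplicative (ZMod n) ⋊[(zmodAction n).comp χ]
        Multiplicative (ZMod d))) →* Aˣ ⧸ centralUnits K A, Function.Injective f := by
  have hχd : (χ (.ofAdd 1) : ZMod n) ^ d = 1 := by
    rw [← Units.val_pow_eq_pow_val, ← map_pow, ← ofAdd_nsmul]
    simp
  obtain ⟨N, q, hN, ⟨k, hk⟩, ⟨m, hm⟩, hq, hqd, hqn, hqN⟩ := exists_prime_orderOf_eq hdn hχd
  have : NeZero N := ⟨hN⟩
  have hunit : IsUnit (q : ZMod N) := (orderOf_pos_iff.1 (hqN ▸ NeZero.pos d)).isUnit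
  have hndvd : ¬ q ∣ N := hq.coprime_iff_not_dvd.1 ((ZMod.isUnit_iff_coprime q N).1 hunit)
  obtain ⟨K, L, _, _, _, _, _, _, σ, v, η, hgen, hord, hv, hvq, hη, hση⟩ :=
    exists_cyclic_extension_frobenius hq hndvd
  have hσpow (i : ℕ) : σ (η ^ i : Lˣ) = ((η ^ i) ^ q : Lˣ) := by
    simp only [Units.val_pow_eq_pow_val, map_pow, hση, pow_right_comm]
  have hω : IsPrimitiveRoot (η ^ k) d := hη.pow (NeZero.pos N) (hk.trans (mul_comm d k))
  have hσω : σ (η ^ k : Lˣ) = (η ^ k : Lˣ) := by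
    have hmod : q ≡ 1 [MOD orderOf (η ^ k)] := by
      rw [← hω.eq_orderOf, ← ZMod.natCast_eq_natCast_iff, hqd, Nat.cast_one]
    rw [hσpow, pow_eq_pow_iff_modEq.2 hmod, pow_one]
  obtain ⟨A, _, _, h⟩ := exists_divisionRing_injective_hom hgen (hord.trans hqN) hv (a := (q : K))
    (by simpa using hvq) hω hσω
    (hη.pow (NeZero.pos N) (hm.trans (mul_comm n m))) (by simpa using hσpow m) hdn (hqn ▸ hχ)
    hqn.symm
  exact ⟨K, A, _, ‹_›, _, _, h⟩

end Existence

/-- Let `n ≥ 1` be an integer divisible only by primes congruent to `1` modulo `3`, let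
`G' = μ_n ⋊_χ μ₃` be a balanced semidirect product, and let `G = μ₃ × G'`. Then there exist
a number field `K` and a central division algebra `A` of dimension `9` over `K` such that
the quotient group `Aˣ/Kˣ` contains a subgroup isomorphic to `G`. -/
theorem stmt_8 (n : ℕ) (hn : 1 ≤ n) (hdiv : ∀ p : ℕ, p.Prime → p ∣ n → p % 3 = 1)
    (χ : Multiplicative (ZMod 3) →* (ZMod n)ˣ) (hχ : IsBalanced n χ) :
    ∃ (D : CentralDivAlg)
      (f : (Multiplicative (ZMod 3) ×
        (Multiplicative (ZMod n) ⋊[(zmodAction n).comp χ] Multiplicative (ZMod 3))) →* D.Q),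
      Function.Injective f := by
  have : NeZero n := ⟨by lia⟩
  have h3n : Nat.Coprime 3 n := (Nat.Prime.coprime_iff_not_dvd Nat.prime_three).2 fun h ↦
    absurd (hdiv 3 Nat.prime_three h) (by decide)
  obtain ⟨K, A, _, _, _, _, hcenter, hrank, f, hf⟩ :=
    stmt_8_general 3 n h3n χ (hχ.isUnit_sub_one h3n)
  exact ⟨⟨K, A, hcenter, hrank⟩, f, hf⟩
end

section
/- Let n be a positive integer of the form n = 3^r·∏ p_i^{r_i}, where the p_i are primes congruent to 1 modulo 3 and r ≤ 1 (equivalently, n is not divisible by 9 and not divisible by any prime congruent to 2 modulo 3). Then there exist a number field K and an associative unital K-algebra A which is a division ring, has center equal to K, and has dimension 9 over K, such that the quotient group Aˣ/Kˣ contains an element of order n. -/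
/-!
Choose a prime `q` whose class modulo `7 n` is a root of `X ^ 2 + X + 1`. In `L = ℚ(ζ)`, with `ζ` a
primitive `7 n`-th root of unity, the Frobenius `σ` at `q` then has order three; let `K` be its
fixed field. A place of `L` above `q` is fixed by `σ` and unramified over `q`, so the values of the
powers `1, u, u ^ 2` of a cube root `u` of `q` are distinct modulo values of `L`: no cancellation
can occur and the cyclic algebra `(L/K, σ, q)`, of dimension nine, has no zero divisors. Since
`ζ` has norm `ζ ^ (1 + q + q ^ 2) = 1`, Hilbert 90 gives `y : Lˣ` with `y / σ y = ζ`. A power of `y`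
lies in `K` exactly when it is fixed by `σ`, so `y` has order `7 n` in `Aˣ/Kˣ`, and `y ^ 7` has
order `n`. The factor `7` excludes `n = 1` and `n = 3`, for which `σ` would be trivial.
-/

theorem sq_add_self_add_one_eq_zero_of_pow_three_eq_one {R : Type*} [CommRing R] [IsLocalRing R]
    (h3 : IsUnit (3 : R)) {u : R} (hu : u ^ 3 = 1) (hu1 : u ≠ 1) : u ^ 2 + u + 1 = 0 := by
  have hprod : (u - 1) * (u ^ 2 + u + 1) = 0 := by linear_combination hu
  have hsum : IsUnit ((u ^ 2 + u + 1) + (u - 1) * -(u + 2)) := by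
    convert h3 using 1
    ring
  obtain h | h := IsLocalRing.isUnit_or_isUnit_of_isUnit_add hsum
  · exact absurd (sub_eq_zero.1 (h.mul_left_eq_zero.1 hprod)) hu1
  · exact (isUnit_of_mul_isUnit_left h).mul_right_eq_zero.1 hprod

theorem isLocalRing_zmod_prime_pow (p k : ℕ) [Fact p.Prime] (hk : k ≠ 0) :
    IsLocalRing (ZMod (p ^ k)) := by
  have : Fact (1 < p ^ k) := ⟨Nat.one_lt_pow hk (Fact.out : p.Prime).one_lt⟩
  exact IsLocalRing.of_surjective' (PadicInt.toZModPow k) (ZMod.ringHom_surjective _)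

theorem exists_sq_add_self_add_one_eq_zero_zmod_prime_pow {p k : ℕ} (hp : p.Prime) (hk : k ≠ 0)
    (h3 : p % 3 = 1) : ∃ a : ZMod (p ^ k), a ^ 2 + a + 1 = 0 := by
  have : Fact p.Prime := ⟨hp⟩
  have := isLocalRing_zmod_prime_pow p k hk
  have : NeZero (p ^ k) := ⟨pow_ne_zero k hp.ne_zero⟩
  have hcard : 3 ∣ Nat.card (ZMod (p ^ k))ˣ := by
    rw [Nat.card_eq_fintype_card, ZMod.card_units_eq_totient, Nat.totient_prime_pow hp (by omega)]
    exact (show 3 ∣ p - 1 by omega).mul_left _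
  obtain ⟨u, hu⟩ := exists_prime_orderOf_dvd_card' 3 hcard
  have hu3 : (u : ZMod (p ^ k)) ^ 3 = 1 := by
    rw [← Units.val_pow_eq_pow_val, ← hu, pow_orderOf_eq_one, Units.val_one]
  have hu1 : (u : ZMod (p ^ k)) ≠ 1 := by
    rw [Ne, Units.val_eq_one, ← orderOf_eq_one_iff, hu]
    norm_num
  have h3 : IsUnit (3 : ZMod (p ^ k)) := by
    refine (ZMod.isUnit_iff_coprime 3 _).2 (Nat.Coprime.pow_right _ ?_)
    exact (Nat.coprime_primes Nat.prime_three hp).2 (by omega)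
  exact ⟨u, sq_add_self_add_one_eq_zero_of_pow_three_eq_one h3 hu3 hu1⟩

theorem exists_sq_add_self_add_one_eq_zero_zmod {n : ℕ} (h9 : ¬ 9 ∣ n)
    (hdiv : ∀ p : ℕ, p.Prime → p ∣ n → p = 3 ∨ p % 3 = 1) :
    ∃ a : ZMod n, a ^ 2 + a + 1 = 0 := by
  induction n using Nat.recOnPosPrimePosCoprime with
  | zero => exact absurd (dvd_zero 9) h9
  | one => exact ⟨0, Subsingleton.elim _ _⟩
  | prime_pow p k hp hk =>
    obtain rfl | h3 := hdiv p hp (dvd_pow_self p hk.ne')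
    · obtain rfl : k = 1 := by
        by_contra hk1
        exact h9 (pow_dvd_pow 3 (show 2 ≤ k by omega))
      exact ⟨1, by decide⟩
    · exact exists_sq_add_self_add_one_eq_zero_zmod_prime_pow hp hk.ne' h3
  | coprime m l _ _ hml ihm ihl =>
    obtain ⟨a, ha⟩ := ihm (fun h ↦ h9 (h.mul_right l)) fun p hp h ↦ hdiv p hp (h.mul_right l)
    obtain ⟨b, hb⟩ := ihl (fun h ↦ h9 (h.mul_left m)) fun p hp h ↦ hdiv p hp (h.mul_left m)
    let e := ZMod.chineseRemainder hml
    refine ⟨e.symm (a, b), e.injective ?_⟩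
    rw [map_add, map_add, map_pow, e.apply_symm_apply, map_one, map_zero]
    exact Prod.ext ha hb

section RootWeight

variable {L Γ₀ : Type*} [Field L] [LinearOrderedCommGroupWithZero Γ₀] {v : Valuation L Γ₀}
  {d : ℕ} {c : L}

/-- The `d`-th power of the value of `x * u ^ k`, where `u` is a `d`-th root of `c`. Taking the
`d`-th power keeps it in the value group of `L`. -/
def rootWeight (v : Valuation L Γ₀) (d : ℕ) (c : L) (k : ℕ) (x : L) : Γ₀ :=
  v x ^ d * v c ^ k

theorem rootWeight_eq_zero_iff [NeZero d] (hc : c ≠ 0) {k : ℕ} {x : L} :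
    rootWeight v d c k x = 0 ↔ x = 0 := by
  simp [rootWeight, hc, NeZero.ne d]

theorem eq_of_rootWeight_eq (h : ∀ k, 0 < k → k < d → ∀ x : L, v x ^ d ≠ v c ^ k) (hc : c ≠ 0)
    {x y : L} (hx : x ≠ 0) (hy : y ≠ 0) {i j : Fin d}
    (hw : rootWeight v d c i x = rootWeight v d c j y) : i = j := by
  wlog hij : i < j generalizing x y i j
  · by_contra hne
    exact hne (this hy hx hw.symm (by lia)).symm
  have hvc : v c ^ (i : ℕ) ≠ 0 := pow_ne_zero _ (v.ne_zero_iff.2 hc)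
  have hvy : v y ^ d ≠ 0 := pow_ne_zero _ (v.ne_zero_iff.2 hy)
  refine absurd ?_ (h (j - i) (by lia) (by lia) (x / y))
  rw [map_div₀, div_pow, div_eq_iff hvy]
  refine mul_right_cancel₀ hvc ?_
  rw [mul_right_comm, ← pow_add, Nat.sub_add_cancel hij.le, mul_comm (v c ^ _)]
  exact hw

theorem exists_forall_ne_rootWeight_lt [NeZero d]
    (h : ∀ k, 0 < k → k < d → ∀ x : L, v x ^ d ≠ v c ^ k) (hc : c ≠ 0) {x : Fin d → L}
    (hx : x ≠ 0) :
    ∃ k, x k ≠ 0 ∧ ∀ j ≠ k, rootWeight v d c j (x j) < rootWeight v d c k (x k) := by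
  obtain ⟨k, hk⟩ := Finite.exists_max fun k : Fin d ↦ rootWeight v d c k (x k)
  obtain ⟨i, hi⟩ := Function.ne_iff.1 hx
  have hxk : x k ≠ 0 := fun hxk ↦ hi <| (rootWeight_eq_zero_iff hc).1 <|
    le_zero_iff.1 <| (hk i).trans_eq <| (rootWeight_eq_zero_iff hc).2 hxk
  refine ⟨k, hxk, fun j hj ↦ (hk j).lt_of_ne fun hjk ↦ hj ?_⟩
  refine eq_of_rootWeight_eq h hc (fun hxj ↦ hxk ?_) hxk hjk
  exact (rootWeight_eq_zero_iff hc).1 <| hjk.symm.trans <| (rootWeight_eq_zero_iff hc).2 hxj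

theorem ite_lt_pow_mul_pow {M : Type*} [Monoid M] (c : M) (k l : Fin d) :
    (if l < k then c else 1) ^ d * c ^ (l : ℕ) = c ^ (k : ℕ) * c ^ ((l - k : Fin d) : ℕ) := by
  rw [← pow_add]
  obtain h | h := lt_or_ge l k
  · rw [if_pos h, ← pow_add, Fin.coe_sub_iff_lt.2 h]
    congr 1
    omega
  · rw [if_neg h.not_gt, one_pow, one_mul, Fin.coe_sub_iff_le.2 h]
    congr 1
    omega

theorem rootWeight_mul_ite_lt_mul (v : Valuation L Γ₀) (c x y : L) (k l : Fin d) :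
    rootWeight v d c l (x * ((if l < k then c else 1) * y)) =
      rootWeight v d c k x * rootWeight v d c (l - k : Fin d) y := by
  simp only [rootWeight]
  rw [map_mul, map_mul, apply_ite v, map_one, mul_pow, mul_pow, mul_assoc, mul_right_comm,
    ite_lt_pow_mul_pow, mul_mul_mul_comm, mul_assoc (v x ^ d) (v y ^ d), mul_comm (v y ^ d)]

end RootWeight

section CyclicAlgebra

open Matrix

variable {d : ℕ} [NeZero d] {K L : Type*} [Field K] [Field L] [Algebra K L]

/-- The companion matrix of `X ^ d - b`, up to transposition: the generator `u` with `u ^ d = b` of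
a cyclic algebra. When `d = 1` it is the `1 × 1` matrix `b`. -/
def cyclicShift {R : Type*} [Semiring R] (d : ℕ) [NeZero d] (b : R) : Matrix (Fin d) (Fin d) R :=
  .of fun i j ↦ if j = i + 1 then (if j = 0 then b else 1) else 0

theorem mul_cyclicShift_apply {R : Type*} [Semiring R] (b : R) (M : Matrix (Fin d) (Fin d) R)
    (i j : Fin d) :
    (M * cyclicShift d b) i (j + 1) = M i j * if j + 1 = 0 then b else 1 := by
  simp [Matrix.mul_apply, cyclicShift]

theorem cyclicShift_mul_apply {R : Type*} [Semiring R] (b : R) (M : Matrix (Fin d) (Fin d) R)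
    (i j : Fin d) :
    (cyclicShift d b * M) i j = (if i + 1 = 0 then b else 1) * M (i + 1) j := by
  simp [Matrix.mul_apply, cyclicShift]

theorem ite_lt_mul_ite_add_one_eq_zero {R : Type*} [Monoid R] (b : R) (i j : Fin d) :
    (if j < i then b else 1) * (if j + 1 = 0 then b else 1) =
      (if i + 1 = 0 then b else 1) * if j + 1 < i + 1 then b else 1 := by
  obtain _ | m := d
  · exact i.elim0
  simp only [Fin.lt_def, Fin.ext_iff, Fin.val_add_one, Fin.val_last, Fin.coe_ofNat_eq_mod,
    Nat.zero_mod]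
  split_ifs <;> first | omega | simp_all

theorem pow_val_add_one {G : Type*} [Monoid G] {g : G} (hg : g ^ d = 1) (i : Fin d) :
    g ^ ((i + 1 : Fin d) : ℕ) = g ^ ((i : ℕ) + 1) := by
  rw [Fin.val_add, Fin.val_one', Nat.add_mod_mod, ← pow_eq_pow_mod _ hg]

variable (d) in
/-- The cyclic algebra `(L/K, σ, b)` of degree `d`, realised as the algebra of those `d × d`
matrices over `L` on which applying `σ` entrywise agrees with conjugation by `cyclicShift d b`. -/
def cyclicAlgebra (σ : Gal(L/K)) (b : K) : Subalgebra K (Matrix (Fin d) (Fin d) L) where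
  carrier := {M | σ.mapMatrix M * cyclicShift d (algebraMap K L b) =
    cyclicShift d (algebraMap K L b) * M}
  mul_mem' {M N} hM hN := by
    rw [Set.mem_ofPred_eq] at hM hN ⊢
    rw [map_mul, mul_assoc, hN, ← mul_assoc, hM, mul_assoc]
  add_mem' {M N} hM hN := by
    rw [Set.mem_ofPred_eq] at hM hN ⊢
    rw [map_add, add_mul, mul_add, hM, hN]
  algebraMap_mem' r := by
    rw [Set.mem_ofPred_eq, AlgEquiv.commutes]
    exact Algebra.commutes r _

namespace cyclicAlgebra

variable {σ : Gal(L/K)} {b : K} {M N : Matrix (Fin d) (Fin d) L}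

theorem mem_iff :
    M ∈ cyclicAlgebra d σ b ↔ ∀ i j, σ (M i j) * (if j + 1 = 0 then algebraMap K L b else 1) =
      (if i + 1 = 0 then algebraMap K L b else 1) * M (i + 1) (j + 1) := by
  change σ.mapMatrix M * _ = _ ↔ _
  rw [← Matrix.ext_iff]
  refine forall_congr' fun i ↦ (Equiv.addRight 1).forall_congr_right.symm.trans ?_
  simp only [Equiv.coe_addRight, mul_cyclicShift_apply, cyclicShift_mul_apply,
    AlgEquiv.mapMatrix_apply, map_apply]

theorem apply_eq (hM : M ∈ cyclicAlgebra d σ b) (i j : Fin d) :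
    M i j = (if j < i then algebraMap K L b else 1) * (σ ^ (i : ℕ)) (M 0 (j - i)) := by
  obtain _ | m := d
  · exact i.elim0
  induction i using Fin.induction generalizing j with
  | zero => simp
  | succ i ih =>
    obtain ⟨j, rfl⟩ := (Equiv.addRight (1 : Fin (m + 1))).surjective j
    have h := mem_iff.1 hM i.castSucc j
    have hi : i.castSucc + 1 ≠ 0 := Fin.coeSucc_eq_succ ▸ i.succ_ne_zero
    have hcarry := ite_lt_mul_ite_add_one_eq_zero (algebraMap K L b) i.castSucc j
    rw [if_neg hi, one_mul] at h hcarry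
    rw [Equiv.coe_addRight, ← Fin.coeSucc_eq_succ, ← h, ← hcarry, add_sub_add_right_eq_sub, ih,
      Fin.coeSucc_eq_succ, Fin.val_succ, pow_succ', AlgEquiv.mul_apply, map_mul, mul_right_comm,
      Fin.val_castSucc, apply_ite σ, AlgEquiv.commutes, map_one]

theorem ext_row (hM : M ∈ cyclicAlgebra d σ b) (hN : N ∈ cyclicAlgebra d σ b) (h : M 0 = N 0) :
    M = N := by
  ext i j
  rw [apply_eq hM, apply_eq hN, h]

theorem mul_apply_zero (hN : N ∈ cyclicAlgebra d σ b) (M : Matrix (Fin d) (Fin d) L) (l : Fin d) :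
    (M * N) 0 l = ∑ k, M 0 k *
      ((if l < k then algebraMap K L b else 1) * (σ ^ (k : ℕ)) (N 0 (l - k))) := by
  simp only [Matrix.mul_apply, ← apply_eq hN]

theorem of_row_mem (hσ : σ ^ d = 1) (x : Fin d → L) :
    (Matrix.of fun i j : Fin d ↦
        (if j < i then algebraMap K L b else 1) * (σ ^ (i : ℕ)) (x (j - i))) ∈
      cyclicAlgebra d σ b := by
  refine mem_iff.2 fun i j ↦ ?_
  simp only [of_apply, map_mul, apply_ite σ, AlgEquiv.commutes, map_one]
  rw [mul_right_comm, ite_lt_mul_ite_add_one_eq_zero, add_sub_add_right_eq_sub,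
    pow_val_add_one hσ, pow_succ', AlgEquiv.mul_apply, mul_assoc]

/-- An element of the cyclic algebra, written `∑ i, x i * u ^ i` with `x i` in `L`, is determined by
its coefficients, which form the first row of the matrix. -/
def rowEquiv (hσ : σ ^ d = 1) : cyclicAlgebra d σ b ≃ₗ[K] (Fin d → L) where
  toFun M := M.1 0
  map_add' _ _ := rfl
  map_smul' _ _ := rfl
  invFun x := ⟨_, of_row_mem hσ x⟩
  left_inv M := Subtype.ext <| ext_row (of_row_mem hσ _) M.2 <| by ext; simp
  right_inv x := by ext; simp

theorem finrank_eq [FiniteDimensional K L] (hσ : σ ^ d = 1) :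
    Module.finrank K (cyclicAlgebra d σ b) = d * Module.finrank K L := by
  simp [(rowEquiv (b := b) hσ).finrank_eq, Module.finrank_pi_fintype]

variable (b) in
/-- The embedding of `L` as a maximal subfield of the cyclic algebra. -/
def diagonalHom (hσ : σ ^ d = 1) : L →ₐ[K] cyclicAlgebra d σ b :=
  ((diagonalAlgHom K).comp
    (AlgHom.pi fun i : Fin d ↦ (σ ^ (i : ℕ) : Gal(L/K)).toAlgHom)).codRestrict _
    fun x ↦ mem_iff.2 fun i j ↦ by
      obtain rfl | hij := eq_or_ne i j
      · simp [pow_val_add_one hσ, pow_succ', mul_comm]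
      · simp [hij]

theorem cyclicShift_mem : cyclicShift d (algebraMap K L b) ∈ cyclicAlgebra d σ b := by
  refine congrArg (· * _) ?_
  ext i j
  simp [cyclicShift, apply_ite σ]

theorem coe_diagonalHom (hσ : σ ^ d = 1) (t : L) :
    (diagonalHom b hσ t : Matrix (Fin d) (Fin d) L) = diagonal fun i : Fin d ↦ (σ ^ (i : ℕ)) t :=
  rfl

theorem row_eq_zero_of_commute_diagonalHom (hσ : orderOf σ = d)
    (hM : ∀ t, Commute (diagonalHom b (hσ ▸ pow_orderOf_eq_one σ) t : Matrix (Fin d) (Fin d) L) M)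
    {l : Fin d} (hl : l ≠ 0) : M 0 l = 0 := by
  by_contra hMl
  refine pow_ne_one_of_lt_orderOf (Fin.val_ne_zero_iff.2 hl) (hσ ▸ l.2 : (l : ℕ) < orderOf σ) ?_
  ext t
  have ht := congrFun₂ (hM t).eq 0 l
  rw [coe_diagonalHom, diagonal_mul, mul_diagonal, Fin.val_zero, pow_zero, AlgEquiv.one_apply,
    mul_comm t] at ht
  exact (mul_left_cancel₀ hMl ht).symm

theorem apply_zero_zero_eq_of_commute_cyclicShift (hb : b ≠ 0) (hM : M ∈ cyclicAlgebra d σ b)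
    (hcomm : Commute (cyclicShift d (algebraMap K L b)) M) : σ (M 0 0) = M 0 0 := by
  have hcorner := congrFun₂ hcomm.eq 0 (0 + 1)
  rw [mul_cyclicShift_apply, cyclicShift_mul_apply, ← mem_iff.1 hM] at hcorner
  refine mul_right_cancel₀ ?_ hcorner
  split_ifs <;> simp [hb]

theorem center_eq_bot (hσ : orderOf σ = d) (hb : b ≠ 0)
    (hfix : ∀ x : L, σ x = x → x ∈ Set.range (algebraMap K L)) :
    Subalgebra.center K (cyclicAlgebra d σ b) = ⊥ := by
  refine eq_bot_iff.2 fun M hM ↦ ?_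
  have hcomm (N : cyclicAlgebra d σ b) : Commute N.1 M.1 :=
    congrArg Subtype.val (Subalgebra.mem_center_iff.1 hM N)
  obtain ⟨c, hc⟩ :=
    hfix _ (apply_zero_zero_eq_of_commute_cyclicShift hb M.2 (hcomm ⟨_, cyclicShift_mem⟩))
  refine Algebra.mem_bot.2 ⟨c, Subtype.ext <| ext_row (Subalgebra.algebraMap_mem _ c) M.2 ?_⟩
  ext l
  obtain rfl | hl := eq_or_ne l 0
  · simpa [algebraMap_matrix_apply] using hc
  · simp [algebraMap_matrix_apply, hl.symm,
      row_eq_zero_of_commute_diagonalHom hσ (fun _ ↦ hcomm _) hl]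

theorem noZeroDivisors {Γ₀ : Type*} [LinearOrderedCommGroupWithZero Γ₀] {v : Valuation L Γ₀}
    (hv : ∀ x, v (σ x) = v x) (hb : b ≠ 0)
    (h : ∀ k, 0 < k → k < d → ∀ x : L, v x ^ d ≠ v (algebraMap K L b) ^ k) :
    NoZeroDivisors (cyclicAlgebra d σ b) where
  eq_zero_or_eq_zero_of_mul_eq_zero {M N} hMN := by
    by_contra! h0
    set c := algebraMap K L b
    have hc : c ≠ 0 := by simpa [c] using hb
    have hvσ (m : ℕ) (x : L) : v ((σ ^ m) x) = v x := by
      induction m with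
      | zero => rfl
      | succ m ih => rw [pow_succ', AlgEquiv.mul_apply, hv, ih]
    have hrow (P : cyclicAlgebra d σ b) (hP : P ≠ 0) : P.1 0 ≠ 0 := fun h ↦
      hP <| Subtype.ext <| ext_row P.2 (zero_mem _) h
    obtain ⟨i, hi, hi_max⟩ := exists_forall_ne_rootWeight_lt h hc (hrow M h0.1)
    obtain ⟨j, hj, hj_max⟩ := exists_forall_ne_rootWeight_lt h hc (hrow N h0.2)
    have hentry := congrFun₂ (congrArg Subtype.val hMN) 0 (i + j)
    rw [Subalgebra.coe_mul, mul_apply_zero N.2] at hentry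
    have hw (m k : ℕ) (x : L) : rootWeight v d c k ((σ ^ m) x) = rootWeight v d c k x := by
      rw [rootWeight, hvσ, rootWeight]
    refine v.ne_zero_iff.2 ?_ ((v.map_sum_eq_of_lt (Finset.mem_univ i) fun k hk ↦ ?_).symm.trans
      ((congrArg v hentry).trans v.map_zero))
    · rw [add_sub_cancel_left]
      refine mul_ne_zero hi (mul_ne_zero ?_ ((map_ne_zero _).2 hj))
      split_ifs <;> simp [hb]
    · have hki : k ≠ i := by simpa using hk
      have hkj : i + j - k ≠ j := fun h ↦ hki (add_right_cancel (sub_eq_iff_eq_add'.1 h)).symm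
      suffices rootWeight v d c (i + j : Fin d) _ < rootWeight v d c (i + j : Fin d) _ from
        lt_of_pow_lt_pow_left₀ d zero_le (lt_of_mul_lt_mul_right this zero_le)
      rw [rootWeight_mul_ite_lt_mul, rootWeight_mul_ite_lt_mul, add_sub_cancel_left, hw, hw]
      exact mul_lt_mul'' (hi_max k hki) (hj_max _ hkj) zero_le zero_le

end cyclicAlgebra

end CyclicAlgebra

section Galois

variable {K L : Type*} [Field K] [Field L] [Algebra K L] {σ : Gal(L/K)}

theorem pow_apply_eq_pow_pow {x : L} {q : ℕ} (hx : σ x = x ^ q) (i : ℕ) :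
    (σ ^ i) x = x ^ q ^ i := by
  induction i with
  | zero => simp
  | succ i ih => rw [pow_succ, AlgEquiv.mul_apply, hx, map_pow, ih, ← pow_mul, ← pow_succ]

theorem exists_zpowers_eq_top_gal_fixedField_zpowers [FiniteDimensional K L] (σ : Gal(L/K)) :
    ∃ τ : Gal(L/IntermediateField.fixedField (Subgroup.zpowers σ)),
      (∀ ρ, ρ ∈ Subgroup.zpowers τ) ∧ orderOf τ = orderOf σ ∧ ∀ x, τ x = σ x := by
  let e := IntermediateField.subgroupEquivAlgEquiv (Subgroup.zpowers σ)
  let g : Subgroup.zpowers σ := ⟨σ, Subgroup.mem_zpowers σ⟩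
  refine ⟨e g, fun ρ ↦ ?_, (e.orderOf_eq g).trans (Subgroup.orderOf_mk σ _), fun x ↦ rfl⟩
  obtain ⟨⟨ρ, hρ⟩, rfl⟩ := e.surjective ρ
  obtain ⟨k, rfl⟩ := Subgroup.mem_zpowers_iff.1 hρ
  exact Subgroup.mem_zpowers_iff.2 ⟨k, (map_zpow e g k).symm⟩

variable [FiniteDimensional K L] [IsGalois K L]

theorem mem_range_algebraMap_iff_of_forall_mem_zpowers
    (hσ : ∀ τ : Gal(L/K), τ ∈ Subgroup.zpowers σ) {x : L} :
    x ∈ Set.range (algebraMap K L) ↔ σ x = x := by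
  rw [IsGalois.mem_range_algebraMap_iff_fixed]
  refine ⟨fun h ↦ h σ, fun h τ ↦ ?_⟩
  have hle : Subgroup.zpowers σ ≤ MulAction.stabilizer Gal(L/K) x := Subgroup.zpowers_le.2 h
  exact hle (hσ τ)

theorem algebraMap_norm_eq_prod_range_pow (hσ : ∀ τ : Gal(L/K), τ ∈ Subgroup.zpowers σ) (x : L) :
    algebraMap K L (Algebra.norm K x) = ∏ i ∈ Finset.range (orderOf σ), (σ ^ i) x := by
  classical
  rw [Algebra.norm_eq_prod_automorphisms, ← IsCyclic.image_range_orderOf hσ, Finset.prod_image]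
  exact pow_injOn_Iio_orderOf.mono (by simp)

theorem algebraMap_norm_eq_pow_of_apply_eq_pow (hσ : ∀ τ : Gal(L/K), τ ∈ Subgroup.zpowers σ)
    {x : L} {q : ℕ} (hx : σ x = x ^ q) :
    algebraMap K L (Algebra.norm K x) = x ^ ∑ i ∈ Finset.range (orderOf σ), q ^ i := by
  rw [algebraMap_norm_eq_prod_range_pow hσ, ← Finset.prod_pow_eq_pow_sum]
  exact Finset.prod_congr rfl fun i _ ↦ pow_apply_eq_pow_pow hx i

end Galois

section CentralUnits

variable {K L A : Type*} [Field K] [Field L] [Algebra K L] [DivisionRing A] [Algebra K A]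

theorem mem_centralUnits_iff {u : Aˣ} :
    u ∈ centralUnits K A ↔ (u : A) ∈ Set.range (algebraMap K A) := by
  constructor
  · rintro ⟨c, rfl⟩
    exact ⟨c, rfl⟩
  · rintro ⟨c, hc⟩
    have hc0 : c ≠ 0 := by
      rintro rfl
      exact u.ne_zero (by rw [← hc, map_zero])
    exact ⟨Units.mk0 c hc0, Units.ext hc⟩

theorem map_mem_centralUnits_iff (φ : L →ₐ[K] A) (y : Lˣ) :
    Units.map (φ : L →* A) y ∈ centralUnits K A ↔ (y : L) ∈ Set.range (algebraMap K L) := by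
  rw [mem_centralUnits_iff, Units.coe_map, MonoidHom.coe_coe, Set.mem_range, Set.mem_range]
  refine exists_congr fun c ↦ ?_
  rw [← φ.commutes]
  exact φ.toRingHom.injective.eq_iff

theorem orderOf_mk_map_eq_orderOf_div [FiniteDimensional K L] [IsGalois K L] {σ : Gal(L/K)}
    (hσ : ∀ τ : Gal(L/K), τ ∈ Subgroup.zpowers σ) (φ : L →ₐ[K] A) (y : Lˣ) :
    orderOf (QuotientGroup.mk (Units.map (φ : L →* A) y) : Aˣ ⧸ centralUnits K A) =
      orderOf ((y : L) / σ y) := by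
  refine orderOf_eq_orderOf_iff.2 fun n ↦ ?_
  have hσy : σ ((y : L) ^ n) ≠ 0 := (map_ne_zero σ).2 (pow_ne_zero n y.ne_zero)
  rw [← QuotientGroup.mk_pow, QuotientGroup.eq_one_iff, ← map_pow, map_mem_centralUnits_iff,
    mem_range_algebraMap_iff_of_forall_mem_zpowers hσ, div_pow, ← map_pow,
    Units.val_pow_eq_pow_val, div_eq_one_iff_eq hσy, eq_comm]

theorem exists_orderOf_eq_of_norm_eq_one {K L : Type} [Field K] [Field L] [Algebra K L]
    [Algebra K A] [FiniteDimensional K L] [IsGalois K L] {σ : Gal(L/K)}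
    (hσ : ∀ τ : Gal(L/K), τ ∈ Subgroup.zpowers σ) (φ : L →ₐ[K] A) {x : L}
    (hx : Algebra.norm K x = 1) : ∃ g : Aˣ ⧸ centralUnits K A, orderOf g = orderOf x := by
  have : IsCyclic Gal(L/K) := ⟨σ, hσ⟩
  obtain ⟨y, rfl⟩ := groupCohomology.exists_div_of_norm_eq_one hσ hx
  exact ⟨_, orderOf_mk_map_eq_orderOf_div hσ φ y⟩

end CentralUnits

section Cyclotomic

open IsDedekindDomain NumberField WithZero
open scoped Pointwise

section SMul

variable {R F G : Type*} [CommRing R] [IsDedekindDomain R] [Field F] [Algebra R F] [Group G]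
  [MulSemiringAction G R] {P : HeightOneSpectrum R} {g : G}

theorem intValuation_smul_eq (hg : g • P.asIdeal = P.asIdeal) (r : R) :
    P.intValuation (g • r) = P.intValuation r := by
  obtain rfl | hr := eq_or_ne r 0
  · rw [smul_zero]
  have hmem (n : ℕ) : g • r ∈ P.asIdeal ^ n ↔ r ∈ P.asIdeal ^ n := by
    nth_rw 1 [← hg, ← smul_pow', Ideal.smul_mem_pointwise_smul_iff]
  have hmult : emultiplicity P.asIdeal (.span {g • r}) = emultiplicity P.asIdeal (.span {r}) :=
    emultiplicity_eq_emultiplicity_iff.2 fun n ↦ by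
      rw [Ideal.dvd_span_singleton, Ideal.dvd_span_singleton, hmem]
  rw [P.intValuation_eq_exp_neg_multiplicity hr,
    P.intValuation_eq_exp_neg_multiplicity ((smul_ne_zero_iff_ne g).2 hr),
    multiplicity_eq_of_emultiplicity_eq hmult]

theorem valuation_smul_eq [IsFractionRing R F] [MulSemiringAction G F] [SMulDistribClass G R F]
    (hg : g • P.asIdeal = P.asIdeal) (x : F) :
    P.valuation F (g • x) = P.valuation F x := by
  obtain ⟨r, s, -, rfl⟩ := IsFractionRing.div_surjective (A := R) x
  simp only [smul_div₀', ← algebraMap.smul', map_div₀, HeightOneSpectrum.valuation_of_algebraMap,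
    intValuation_smul_eq hg]

end SMul

section Place

variable {n q : ℕ} [NeZero n] [Fact q.Prime] {L : Type*} [Field L] [NumberField L]
  [IsCyclotomicExtension {n} ℚ L]

theorem smul_eq_of_galEquivZMod_eq {hq : q.Coprime n} {σ : Gal(L/ℚ)}
    (hσ : IsCyclotomicExtension.Rat.galEquivZMod n L σ = ZMod.unitOfCoprime q hq)
    (P : Ideal (𝓞 L)) [P.IsMaximal] [P.LiesOver (Ideal.span {(q : ℤ)})] : σ • P = P := by
  have h : ZMod.unitOfCoprime q hq ∈ (IsCyclotomicExtension.Rat.galEquivZMod n L).mapSubgroup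
      (MulAction.stabilizer Gal(L/ℚ) P) := by
    rw [IsCyclotomicExtension.Rat.galEquivZMod_stabilizer n L q P hq]
    exact Subgroup.mem_zpowers _
  obtain ⟨τ, hτ, hτq⟩ := h
  rwa [← (IsCyclotomicExtension.Rat.galEquivZMod n L).injective (hτq.trans hσ.symm)]

theorem valuation_natCast_eq_exp_neg_one_s9 (hq : q.Coprime n) (P : HeightOneSpectrum (𝓞 L))
    [P.asIdeal.LiesOver (Ideal.span {(q : ℤ)})] : P.valuation L q = exp (-1) := by
  have hqp : Prime (q : ℤ) := Nat.prime_iff_prime_int.1 Fact.out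
  let p : HeightOneSpectrum ℤ := ⟨Ideal.span {(q : ℤ)},
    (Ideal.span_singleton_prime hqp.ne_zero).2 hqp, by simpa using hqp.ne_zero⟩
  have : P.asIdeal.LiesOver p.asIdeal := ‹_›
  have hunram : P.asIdeal.ramificationIdx ℤ = 1 :=
    IsCyclotomicExtension.Rat.ramificationIdx_eq_of_not_dvd (m := n) q L P.asIdeal
      ((Nat.Prime.coprime_iff_not_dvd Fact.out).1 hq)
  rw [← map_natCast (algebraMap (𝓞 L) L), HeightOneSpectrum.valuation_of_algebraMap,
    ← map_natCast (algebraMap ℤ (𝓞 L)), ← HeightOneSpectrum.intValuation_liesOver p P,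
    Ideal.ramificationIdx'_eq_ramificationIdx _ _ p.ne_bot, hunram, pow_one]
  exact p.intValuation_singleton hqp.ne_zero rfl

theorem exists_valuation_apply_eq_of_galEquivZMod_eq {hq : q.Coprime n} {σ : Gal(L/ℚ)}
    (hσ : IsCyclotomicExtension.Rat.galEquivZMod n L σ = ZMod.unitOfCoprime q hq) :
    ∃ v : Valuation L ℤᵐ⁰, v q = exp (-1) ∧ ∀ x, v (σ x) = v x := by
  have hq0 : Ideal.span {(q : ℤ)} ≠ ⊥ := by simp [NeZero.ne q]
  obtain ⟨P, _, _⟩ :=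
    Ideal.exists_maximal_ideal_liesOver_of_isIntegral (Ideal.span {(q : ℤ)}) (S := 𝓞 L)
  let w : HeightOneSpectrum (𝓞 L) := ⟨P, inferInstance, Ideal.ne_bot_of_liesOver_of_ne_bot hq0 P⟩
  have : w.asIdeal.LiesOver (Ideal.span {(q : ℤ)}) := ‹_›
  have hσw : σ • w.asIdeal = w.asIdeal := smul_eq_of_galEquivZMod_eq hσ P
  exact ⟨w.valuation L, valuation_natCast_eq_exp_neg_one_s9 hq w, valuation_smul_eq hσw⟩

end Place

theorem pow_ne_exp_neg_one_pow {d k : ℕ} (hk : 0 < k) (hkd : k < d) (a : ℤᵐ⁰) :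
    a ^ d ≠ exp (-1 : ℤ) ^ k := by
  intro h
  have ha : a ≠ 0 := by
    rintro rfl
    rw [zero_pow (hk.trans hkd).ne'] at h
    exact pow_ne_zero k exp_ne_zero h.symm
  rw [← exp_log ha, ← exp_nsmul, ← exp_nsmul, exp_inj] at h
  have hdvd : (d : ℤ) ∣ k := ⟨-a.log, by simp only [nsmul_eq_mul] at h; linarith⟩
  exact hkd.not_ge (Nat.le_of_dvd hk (Int.natCast_dvd_natCast.1 hdvd))

theorem exists_centralDivAlg_orderOf_eq {K L : Type} [Field K] [NumberField K] [Field L]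
    [Algebra K L] [FiniteDimensional K L] [IsGalois K L] {σ : Gal(L/K)}
    (hσ : ∀ τ : Gal(L/K), τ ∈ Subgroup.zpowers σ) (hσ3 : orderOf σ = 3) {b : K}
    {v : Valuation L ℤᵐ⁰} (hv : ∀ x, v (σ x) = v x) (hb : v (algebraMap K L b) = exp (-1))
    {ξ : L} (hξ : Algebra.norm K ξ = 1) :
    ∃ (D : CentralDivAlg) (g : D.Q), orderOf g = orderOf ξ := by
  have hb0 : b ≠ 0 := by
    rintro rfl
    rw [map_zero, map_zero] at hb
    exact exp_ne_zero hb.symm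
  have hσpow : σ ^ 3 = 1 := hσ3 ▸ pow_orderOf_eq_one σ
  have : NoZeroDivisors (cyclicAlgebra 3 σ b) := cyclicAlgebra.noZeroDivisors hv hb0
    fun k hk hk3 x ↦ hb ▸ pow_ne_exp_neg_one_pow hk hk3 (v x)
  have : IsDomain (cyclicAlgebra 3 σ b) := NoZeroDivisors.to_isDomain _
  have hrank : Module.finrank K L = 3 := by
    rw [← IsGalois.card_aut_eq_finrank, ← orderOf_eq_card_of_forall_mem_zpowers hσ, hσ3]
  have hfinrank : Module.finrank K (cyclicAlgebra 3 σ b) = 9 := by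
    rw [cyclicAlgebra.finrank_eq hσpow, hrank]
  have : FiniteDimensional K (cyclicAlgebra 3 σ b) := .of_finrank_pos (by omega)
  let _ := divisionRingOfFiniteDimensional K (cyclicAlgebra 3 σ b)
  obtain ⟨g, hg⟩ :=
    exists_orderOf_eq_of_norm_eq_one hσ (cyclicAlgebra.diagonalHom b hσpow) hξ
  exact ⟨{
    K := K
    A := cyclicAlgebra 3 σ b
    center_eq_bot := cyclicAlgebra.center_eq_bot hσ3 hb0 fun x ↦
      (mem_range_algebraMap_iff_of_forall_mem_zpowers hσ).2
    finrank_eq_nine := hfinrank }, g, hg⟩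

theorem exists_centralDivAlg_orderOf_eq_of_orderOf_eq_three {n : ℕ} [NeZero n] {u : (ZMod n)ˣ}
    (hu : orderOf u = 3) (hsum : (u : ZMod n) ^ 2 + u + 1 = 0) :
    ∃ (D : CentralDivAlg) (g : D.Q), orderOf g = n := by
  obtain ⟨q, -, hqp, hqu⟩ := Nat.forall_exists_prime_gt_and_eq_mod u.isUnit n
  have : Fact q.Prime := ⟨hqp⟩
  have hq : q.Coprime n := (ZMod.isUnit_iff_coprime q n).1 (hqu ▸ u.isUnit)
  obtain rfl : ZMod.unitOfCoprime q hq = u := Units.ext hqu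
  let L := CyclotomicField n ℚ
  have : IsCyclotomicExtension {n} ℚ L := CyclotomicField.isCyclotomicExtension n ℚ
  have : IsGalois ℚ L := IsCyclotomicExtension.isGalois {n} ℚ L
  obtain ⟨σ, hσ⟩ :=
    (IsCyclotomicExtension.Rat.galEquivZMod n L).surjective (ZMod.unitOfCoprime q hq)
  obtain ⟨v, hvq, hvσ⟩ := exists_valuation_apply_eq_of_galEquivZMod_eq hσ
  let K := IntermediateField.fixedField (Subgroup.zpowers σ)
  have : NumberField K := NumberField.of_intermediateField K
  obtain ⟨τ, hτ, hτord, hτσ⟩ := exists_zpowers_eq_top_gal_fixedField_zpowers σ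
  have hτ3 : orderOf τ = 3 := by
    rw [hτord, ← (IsCyclotomicExtension.Rat.galEquivZMod n L).orderOf_eq, hσ, hu]
  have hζ := IsCyclotomicExtension.zeta_spec n ℚ L
  set ζ := IsCyclotomicExtension.zeta n ℚ L
  have hτζ : τ ζ = ζ ^ q := by
    rw [hτσ, IsCyclotomicExtension.Rat.galEquivZMod_apply_of_pow_eq n L σ hζ.pow_eq_one, hσ,
      ZMod.coe_unitOfCoprime, ZMod.val_natCast, ← pow_eq_pow_mod q hζ.pow_eq_one]
  have hnorm : Algebra.norm K ζ = 1 := by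
    refine (algebraMap K L).injective ?_
    rw [algebraMap_norm_eq_pow_of_apply_eq_pow hτ hτζ, hτ3, map_one, hζ.pow_eq_one_iff_dvd,
      ← ZMod.natCast_eq_zero_iff, ← hsum]
    push_cast [Finset.sum_range_succ, hqu]
    ring
  obtain ⟨D, g, hg⟩ := exists_centralDivAlg_orderOf_eq (b := (q : K)) hτ hτ3
    (fun x ↦ (congrArg v (hτσ x)).trans (hvσ x)) (by simpa using hvq) hnorm
  exact ⟨D, g, hg.trans hζ.eq_orderOf.symm⟩

theorem exists_centralDivAlg_orderOf_eq_of_sq_add_self_add_one_eq_zero {n : ℕ} [NeZero n]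
    {a : ZMod n} (ha : a ^ 2 + a + 1 = 0) (h3 : (3 : ZMod n) ≠ 0) :
    ∃ (D : CentralDivAlg) (g : D.Q), orderOf g = n := by
  have hunit : IsUnit a := .of_mul_eq_one (-(a + 1)) (by linear_combination -ha)
  obtain ⟨u, rfl⟩ := hunit
  have hu3 : u ^ 3 = 1 := Units.ext <| by push_cast; linear_combination ((u : ZMod n) - 1) * ha
  have hu1 : u ≠ 1 := by
    rintro rfl
    exact h3 (by rw [← ha, Units.val_one]; norm_num)
  exact exists_centralDivAlg_orderOf_eq_of_orderOf_eq_three (orderOf_eq_prime hu3 hu1) ha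

end Cyclotomic

/-- Let `n` be a positive integer of the form `n = 3^r·∏ p_i^{r_i}` where the `p_i` are primes
congruent to `1` modulo `3` and `r ≤ 1` (equivalently, `n` is not divisible by `9` and not
divisible by any prime congruent to `2` modulo `3`). Then there exist a number field `K` and
a central division algebra `A` of dimension `9` over `K` such that the quotient group `Aˣ/Kˣ`
contains an element of order `n`. -/
theorem stmt_9 (n : ℕ) (hn : 0 < n) (h9 : ¬ (9 ∣ n))
    (hdiv : ∀ p : ℕ, p.Prime → p ∣ n → p = 3 ∨ p % 3 = 1) :
    ∃ (D : CentralDivAlg) (g : D.Q), orderOf g = n := by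
  have : NeZero (7 * n) := ⟨by omega⟩
  obtain ⟨a, ha⟩ := exists_sq_add_self_add_one_eq_zero_zmod (n := 7 * n)
    (fun h ↦ h9 (Nat.Coprime.dvd_of_dvd_mul_left (by norm_num) h)) fun p hp h ↦ by
      obtain h | h := hp.dvd_mul.1 h
      · rw [(Nat.prime_dvd_prime_iff_eq hp (by norm_num)).1 h]
        norm_num
      · exact hdiv p hp h
  have h3 : (3 : ZMod (7 * n)) ≠ 0 := fun h ↦ by
    have hle := Nat.le_of_dvd three_pos ((ZMod.natCast_eq_zero_iff 3 _).1 (mod_cast h))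
    omega
  obtain ⟨D, g, hg⟩ := exists_centralDivAlg_orderOf_eq_of_sq_add_self_add_one_eq_zero ha h3
  refine ⟨D, g ^ 7, ?_⟩
  rw [orderOf_pow_of_dvd (by norm_num) (hg ▸ dvd_mul_right 7 n), hg,
    Nat.mul_div_cancel_left n (by norm_num)]
end

section
/- Let p ≠ 3 be a prime number, let K be a field of characteristic zero, and let A be an associative unital K-algebra which is a division ring with center equal to K and of dimension 9 over K. Then the group Aˣ/Kˣ contains no subgroup isomorphic to μ_p × μ_p; that is, there is no injective group homomorphism from (ℤ/pℤ) × (ℤ/pℤ) into Aˣ/Kˣ. (Equivalently, every finite abelian p-group with p ≠ 3 acting faithfully by automorphisms on a non-trivial Severi–Brauer surface over K is cyclic.) -/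
/-!
Write `d = [A : K]` and let `N` be the norm of `A` over `K`, so that `N z = z ^ d` for `z` in `Kˣ`.
Then `x ↦ x ^ d / N x` kills `Kˣ`, hence induces a map `Aˣ/Kˣ → Aˣ` lifting the `d`-th power map.
Let `H` be a finite abelian subgroup of `Aˣ/Kˣ` of order prime to `d`. A commutator of lifts of two
elements of `H` lies in `Kˣ`, is killed by `|H|` as it is central, and is killed by `d` as it has
norm `1`; so it is trivial, and the lifts commute. On `H` the map above is therefore an injective
homomorphism to `Aˣ`, and `H` is cyclic because it generates a commutative domain inside `A`.
-/

open scoped commutatorElement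

section CentralQuotient

variable {G : Type*} [Group G]

theorem commutatorElement_pow_right {x y : G} (h : Commute ⁅x, y⁆ y) (n : ℕ) :
    ⁅x, y ^ n⁆ = ⁅x, y⁆ ^ n := by
  calc ⁅x, y ^ n⁆ = (x * y * x⁻¹) ^ n * (y ^ n)⁻¹ := by rw [commutatorElement_def, conj_pow]
    _ = (⁅x, y⁆ * y) ^ n * (y ^ n)⁻¹ := by rw [commutatorElement_def, inv_mul_cancel_right]
    _ = ⁅x, y⁆ ^ n := by rw [h.mul_pow, mul_inv_cancel_right]

variable {Z : Subgroup G} {ν : G →* Z} {d : ℕ}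

/-- The map `x ↦ x ^ d / ν x`. When `ν z = z ^ d` on the central subgroup `Z`, it factors through
`G ⧸ Z` and lifts the `d`-th power map of `G ⧸ Z`. -/
def powDiv (ν : G →* Z) (d : ℕ) (x : G) : G :=
  x ^ d * (ν x : G)⁻¹

theorem powDiv_mul (hZ : Z ≤ Subgroup.center G) {x y : G} (h : Commute x y) :
    powDiv ν d (x * y) = powDiv ν d x * powDiv ν d y := by
  have hνx : Commute (powDiv ν d y) (ν x : G)⁻¹ :=
    Subgroup.mem_center_iff.mp (hZ (inv_mem (ν x).2)) _
  calc powDiv ν d (x * y) = x ^ d * (powDiv ν d y * (ν x : G)⁻¹) := by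
        simp only [powDiv, h.mul_pow, map_mul, Subgroup.coe_mul, mul_inv_rev, mul_assoc]
    _ = powDiv ν d x * powDiv ν d y := by rw [hνx.eq, ← mul_assoc, ← powDiv]

theorem powDiv_eq_of_mk_eq (hZ : Z ≤ Subgroup.center G) (hν : ∀ z : Z, ν z = z ^ d) {x y : G}
    (h : (x : G ⧸ Z) = y) : powDiv ν d x = powDiv ν d y := by
  obtain ⟨z, rfl⟩ : ∃ z : Z, x * z = y := ⟨⟨x⁻¹ * y, QuotientGroup.eq.mp h⟩, by simp⟩
  have hz : powDiv ν d (z : G) = 1 := by simp [powDiv, hν]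
  rw [powDiv_mul hZ (Subgroup.mem_center_iff.mp (hZ z.2) x), hz, mul_one]

variable [Z.Normal]

theorem mk_powDiv (x : G) : ((powDiv ν d x : G) : G ⧸ Z) = (x : G ⧸ Z) ^ d :=
  QuotientGroup.mk_mul_of_mem _ (inv_mem (ν x).2)

theorem commute_of_commute_mk (hZ : Z ≤ Subgroup.center G) (hν : ∀ z : Z, ν z = z ^ d) {n : ℕ}
    (hn : n.Coprime d) {x y : G} (hy : (y : G ⧸ Z) ^ n = 1) (hxy : Commute (x : G ⧸ Z) y) :
    Commute x y := by
  have hc : ⁅x, y⁆ ∈ Z := by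
    rw [← QuotientGroup.eq_one_iff]
    exact (map_commutatorElement (QuotientGroup.mk' Z) x y).trans hxy.commutator_eq
  have hyn : y ^ n ∈ Z := by rwa [← QuotientGroup.eq_one_iff, QuotientGroup.mk_pow]
  have hcn : ⁅x, y⁆ ^ n = 1 := by
    rw [← commutatorElement_pow_right (Subgroup.mem_center_iff.mp (hZ hc) y).symm]
    exact Commute.commutator_eq (Subgroup.mem_center_iff.mp (hZ hyn) x)
  have hνc : ν ⁅x, y⁆ = 1 := by
    rw [map_commutatorElement]
    exact Commute.commutator_eq <|
      Subtype.ext (Subgroup.mem_center_iff.mp (hZ (ν y).2) (ν x))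
  have hcd : ⁅x, y⁆ ^ d = 1 := congrArg Subtype.val ((hν ⟨_, hc⟩).symm.trans hνc)
  exact commutatorElement_eq_one_iff_commute.mp <|
    (pow_eq_one_iff_of_coprime hn).mp ⟨hcn, hcd⟩

theorem exists_monoidHom_mk_eq_pow (hZ : Z ≤ Subgroup.center G) (hν : ∀ z : Z, ν z = z ^ d)
    {H : Type*} [CommGroup H] (hH : (Monoid.exponent H).Coprime d) (f : H →* G ⧸ Z) :
    ∃ φ : H →* G, ∀ h, (φ h : G ⧸ Z) = f h ^ d := by
  choose lift hlift using fun h => QuotientGroup.mk_surjective (f h)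
  refine ⟨MonoidHom.mk' (fun h => powDiv ν d (lift h)) fun a b => ?_, fun h => ?_⟩
  · have hcomm : Commute (lift a) (lift b) := by
      refine commute_of_commute_mk hZ hν hH ?_ ?_
      · rw [hlift, ← map_pow, Monoid.pow_exponent_eq_one, map_one]
      · rw [hlift, hlift]
        exact (Commute.all a b).map f
    rw [← powDiv_mul hZ hcomm]
    apply powDiv_eq_of_mk_eq hZ hν
    rw [QuotientGroup.mk_mul, hlift, hlift, hlift, map_mul]
  · exact (mk_powDiv _).trans (by rw [hlift])

end CentralQuotient

open scoped IsMulCommutative in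
theorem isCyclic_of_injective_of_isDomain {H A : Type*} [CommGroup H] [Finite H] [Ring A]
    [IsDomain A] (φ : H →* A) (hφ : Function.Injective φ) : IsCyclic H := by
  let S := Algebra.adjoin ℤ (Set.range φ)
  have : IsMulCommutative S := Algebra.isMulCommutative_adjoin ℤ <| by
    rintro _ ⟨a, rfl⟩ _ ⟨b, rfl⟩
    exact (Commute.all a b).map φ
  let φS : H →* S := φ.codRestrict S fun h => Algebra.subset_adjoin ⟨h, rfl⟩
  exact isCyclic_of_injective_ringHom φS fun a b hab => hφ (congrArg Subtype.val hab)

section CentralUnits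

variable {K A : Type*} [Field K] [DivisionRing A] [Algebra K A]

theorem centralUnits_le_center : centralUnits K A ≤ Subgroup.center Aˣ := by
  rintro _ ⟨k, rfl⟩
  exact Subgroup.mem_center_iff.mpr fun x => Units.ext (Algebra.commutes (k : K) (x : A)).symm

variable (K A) in
/-- The norm of `A` over `K` on units, with its values viewed in the copy of `Kˣ` inside `Aˣ`. -/
noncomputable def normCentralUnits : Aˣ →* centralUnits K A :=
  (Units.map (algebraMap K A).toMonoidHom).rangeRestrict.comp (Units.map (Algebra.norm K))

theorem normCentralUnits_apply_coe (z : centralUnits K A) :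
    normCentralUnits K A z = z ^ Module.finrank K A := by
  obtain ⟨_, k, rfl⟩ := z
  ext
  change algebraMap K A (Algebra.norm K (algebraMap K A k)) = algebraMap K A k ^ _
  rw [Algebra.norm_algebraMap, map_pow]

theorem isCyclic_of_injective_quotient_centralUnits {H : Type*} [CommGroup H] [Finite H]
    (hH : (Nat.card H).Coprime (Module.finrank K A)) (f : H →* Aˣ ⧸ centralUnits K A)
    (hf : Function.Injective f) : IsCyclic H := by
  obtain ⟨φ, hφ⟩ := exists_monoidHom_mk_eq_pow centralUnits_le_center normCentralUnits_apply_coe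
    (hH.coprime_dvd_left Group.exponent_dvd_nat_card) f
  have hφ_inj : Function.Injective φ := fun a b hab => by
    apply (powCoprime hH).injective
    apply hf
    simp only [powCoprime_apply, map_pow, ← hφ, hab]
  exact isCyclic_of_injective_of_isDomain ((Units.coeHom A).comp φ)
    (Units.val_injective.comp hφ_inj)

end CentralUnits

theorem not_isCyclic_multiplicative_zmod_prod_self {n : ℕ} (hn : n ≠ 1) :
    ¬ IsCyclic (Multiplicative (ZMod n × ZMod n)) := by
  rw [isCyclic_multiplicative_iff, AddGroup.isAddCyclic_prod_iff]
  rintro ⟨-, -, h⟩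
  simp [hn] at h

theorem stmt_14_general {n : ℕ} (hn : 1 < n) {K A : Type*} [Field K] [DivisionRing A] [Algebra K A]
    (hcop : n.Coprime (Module.finrank K A))
    (f : Multiplicative (ZMod n × ZMod n) →* (Aˣ ⧸ centralUnits K A)) :
    ¬ Function.Injective f := by
  intro hf
  have : NeZero n := ⟨by omega⟩
  have hcard : (Nat.card (Multiplicative (ZMod n × ZMod n))).Coprime (Module.finrank K A) := by
    simpa using hcop.mul_left hcop
  exact not_isCyclic_multiplicative_zmod_prod_self hn.ne'
    (isCyclic_of_injective_quotient_centralUnits hcard f hf)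

/-- Let `p ≠ 3` be a prime, `K` a field of characteristic zero, and `A` a central division
algebra of dimension `9` over `K`. Then the group `Aˣ/Kˣ` (the automorphism group of the
non-trivial Severi–Brauer surface corresponding to `A`) contains no subgroup isomorphic to
`μ_p × μ_p`: there is no injective group homomorphism `(ℤ/pℤ) × (ℤ/pℤ) → Aˣ/Kˣ`. -/
theorem stmt_14 (p : ℕ) (hp : p.Prime) (hp3 : p ≠ 3)
    (K : Type) [Field K] [CharZero K]
    (A : Type) [DivisionRing A] [Algebra K A]
    (hcenter : Subalgebra.center K A = ⊥) (hrank : Module.finrank K A = 9) :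
    ∀ f : Multiplicative (ZMod p × ZMod p) →* (Aˣ ⧸ centralUnits K A),
      ¬ Function.Injective f := by
  have hcop : p.Coprime (3 ^ 2) := ((Nat.coprime_primes hp Nat.prime_three).mpr hp3).pow_right 2
  exact stmt_14_general hp.one_lt (hrank ▸ hcop)
end
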